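/- The eleven meromorphic Jacobi forms a_0, a_2, a_3, a_4, b_0, b_1, b_2, b_3, b_4, b_5, b_6, viewed as meromorphic functions on ℍ × ℂ^8, are algebraically independent over ℂ. -/

import Mathlib

noncomputable section

open Complex Finset

namespace E8Jacobi

/-- π as a complex number. -/
def πC : ℂ := Real.pi

/-- The E8 lattice as a subset of ℝ^8. -/
def E8Lattice : Set (Fin 8 → ℝ) :=
  {x | ((∀ i, ∃ n : ℤ, x i = n) ∨ (∀ i, ∃ n : ℤ, x i = n + 1/2)) ∧ ∃ m : ℤ, ∑ i, x i = 2 * m}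

/-- Complexification of a real vector. -/
def cv (x : Fin 8 → ℝ) : Fin 8 → ℂ := fun i => (x i : ℂ)

/-- The dot product on ℝ^8. -/
def dotR (x y : Fin 8 → ℝ) : ℝ := ∑ i, x i * y i

/-- The dot product on ℂ^8. -/
def dotC (z w : Fin 8 → ℂ) : ℂ := ∑ i, z i * w i

/-- The Weyl group W(E8): orthogonal matrices preserving the E8 lattice. -/
def WeylE8 : Set (Matrix (Fin 8) (Fin 8) ℝ) :=
  {M | (∀ x y, dotR (M.mulVec x) (M.mulVec y) = dotR x y) ∧
       (∀ x ∈ E8Lattice, M.mulVec x ∈ E8Lattice) ∧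
       (∀ x ∈ E8Lattice, ∃ y ∈ E8Lattice, M.mulVec y = x)}

/-- The complexified (ℂ-linear) action of a real matrix on ℂ^8. -/
def actC (M : Matrix (Fin 8) (Fin 8) ℝ) (z : Fin 8 → ℂ) : Fin 8 → ℂ :=
  fun i => ∑ j, (M i j : ℂ) * z j

/-- A W(E8)-invariant weak Jacobi form of weight `k` and index `m`. -/
structure IsWeakJacobiFormE8 (k : ℤ) (m : ℕ) (φ : ℂ → (Fin 8 → ℂ) → ℂ) : Prop where
  holo : DifferentiableOn ℂ (fun p : ℂ × (Fin 8 → ℂ) => φ p.1 p.2) {p | 0 < p.1.im}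
  weyl_inv : ∀ M ∈ WeylE8, ∀ τ : ℂ, 0 < τ.im → ∀ z, φ τ (actC M z) = φ τ z
  quasi_periodic : ∀ α ∈ E8Lattice, ∀ β ∈ E8Lattice, ∀ τ : ℂ, 0 < τ.im → ∀ z,
    φ τ (fun i => z i + τ * (α i : ℂ) + (β i : ℂ)) =
      Complex.exp (-(m : ℂ) * πC * I * (τ * dotC (cv α) (cv α) + 2 * dotC z (cv α))) * φ τ z
  modular : ∀ a b c d : ℤ, a * d - b * c = 1 → ∀ τ : ℂ, 0 < τ.im → ∀ z,
    φ (((a : ℂ) * τ + (b : ℂ)) / ((c : ℂ) * τ + (d : ℂ))) (fun i => z i / ((c : ℂ) * τ + (d : ℂ))) =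
      ((c : ℂ) * τ + (d : ℂ)) ^ k *
        Complex.exp ((m : ℂ) * πC * I * (c : ℂ) / ((c : ℂ) * τ + (d : ℂ)) * dotC z z) * φ τ z
  fourier : ∃ co : ℕ → E8Lattice → ℂ, ∀ τ : ℂ, 0 < τ.im → ∀ z,
    φ τ z = ∑' (n : ℕ) (w : E8Lattice), co n w *
      Complex.exp (2 * πC * I * dotC (cv w.1) z) * Complex.exp (2 * πC * I * τ) ^ n

/-- Membership in the ring J^{E8}_{*,*} of W(E8)-invariant weak Jacobi forms:
a finite sum of weak Jacobi forms of various weights and indices. -/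
def MemJE8 (φ : ℂ → (Fin 8 → ℂ) → ℂ) : Prop :=
  ∃ (n : ℕ) (k : Fin n → ℤ) (m : Fin n → ℕ) (ψ : Fin n → ℂ → (Fin 8 → ℂ) → ℂ),
    (∀ i, IsWeakJacobiFormE8 (k i) (m i) (ψ i)) ∧
    ∀ τ : ℂ, 0 < τ.im → ∀ z, φ τ z = ∑ i, ψ i τ z

/-- The nome q = e^{2πiτ}. -/
def qExp (τ : ℂ) : ℂ := Complex.exp (2 * πC * I * τ)

/-- The Eisenstein series E4. -/
def E4 (τ : ℂ) : ℂ :=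
  1 + 240 * ∑' n : ℕ+, (n : ℂ) ^ 3 * qExp τ ^ (n : ℕ) / (1 - qExp τ ^ (n : ℕ))

/-- The Eisenstein series E6. -/
def E6 (τ : ℂ) : ℂ :=
  1 - 504 * ∑' n : ℕ+, (n : ℂ) ^ 5 * qExp τ ^ (n : ℕ) / (1 - qExp τ ^ (n : ℕ))

/-- The modular discriminant Δ. -/
def Dl (τ : ℂ) : ℂ := (E4 τ ^ 3 - E6 τ ^ 2) / 1728

/-- The Dedekind eta function. -/
def etaF (τ : ℂ) : ℂ := Complex.exp (2 * πC * I * τ / 24) * ∏' n : ℕ, (1 - qExp τ ^ (n + 1))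

/-- The theta function of the E8 lattice. -/
def Theta (τ : ℂ) (z : Fin 8 → ℂ) : ℂ :=
  ∑' w : E8Lattice, Complex.exp (πC * I * τ * dotC (cv w.1) (cv w.1) + 2 * πC * I * dotC z (cv w.1))

/-- The Jacobi theta function θ1. -/
def th1 (z τ : ℂ) : ℂ :=
  I * ∑' n : ℤ, (-1 : ℂ) ^ n * Complex.exp (2 * πC * I * z * ((n : ℂ) - 1/2)) *
    Complex.exp (πC * I * τ * ((n : ℂ) - 1/2) ^ 2)

/-- The Jacobi theta function θ2. -/
def th2 (z τ : ℂ) : ℂ :=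
  ∑' n : ℤ, Complex.exp (2 * πC * I * z * ((n : ℂ) - 1/2)) *
    Complex.exp (πC * I * τ * ((n : ℂ) - 1/2) ^ 2)

/-- The Jacobi theta function θ3. -/
def th3 (z τ : ℂ) : ℂ :=
  ∑' n : ℤ, Complex.exp (2 * πC * I * z * (n : ℂ)) * Complex.exp (πC * I * τ * (n : ℂ) ^ 2)

/-- The Jacobi theta function θ4. -/
def th4 (z τ : ℂ) : ℂ :=
  ∑' n : ℤ, (-1 : ℂ) ^ n * Complex.exp (2 * πC * I * z * (n : ℂ)) *
    Complex.exp (πC * I * τ * (n : ℂ) ^ 2)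

/-- A1 = Θ(τ,z). -/
def A1 (τ : ℂ) (z : Fin 8 → ℂ) : ℂ := Theta τ z

/-- A_m for m = 2, 3, 5. -/
def AM (m : ℕ) (τ : ℂ) (z : Fin 8 → ℂ) : ℂ :=
  ((m : ℂ) ^ 3 / ((m : ℂ) ^ 3 + 1)) *
    (Theta ((m : ℂ) * τ) (fun i => (m : ℂ) * z i) +
      ((m : ℂ) ^ 4)⁻¹ * ∑ k ∈ Finset.range m, Theta ((τ + (k : ℂ)) / (m : ℂ)) z)

def A2 : ℂ → (Fin 8 → ℂ) → ℂ := AM 2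
def A3 : ℂ → (Fin 8 → ℂ) → ℂ := AM 3
def A5 : ℂ → (Fin 8 → ℂ) → ℂ := AM 5

/-- A4 = Θ(τ,2z). -/
def A4 (τ : ℂ) (z : Fin 8 → ℂ) : ℂ := Theta τ (fun i => 2 * z i)

def ee1 (τ : ℂ) : ℂ := (th3 0 τ ^ 4 + th4 0 τ ^ 4) / 12
def ee2 (τ : ℂ) : ℂ := (th2 0 τ ^ 4 - th4 0 τ ^ 4) / 12
def ee3 (τ : ℂ) : ℂ := (-th2 0 τ ^ 4 - th3 0 τ ^ 4) / 12
def h0 (τ : ℂ) : ℂ := th3 0 (2*τ) * th3 0 (6*τ) + th2 0 (2*τ) * th2 0 (6*τ)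

def B2 (τ : ℂ) (z : Fin 8 → ℂ) : ℂ :=
  (32/5) * (ee1 τ * Theta (2*τ) (fun i => 2 * z i)
    + (1/2^4) * ee3 τ * Theta (τ/2) z + (1/2^4) * ee2 τ * Theta ((τ+1)/2) z)

def B3 (τ : ℂ) (z : Fin 8 → ℂ) : ℂ :=
  (81/80) * (h0 τ ^ 2 * Theta (3*τ) (fun i => 3 * z i)
    - (1/3^5) * ∑ k ∈ Finset.range 3, h0 ((τ + (k:ℂ))/3) ^ 2 * Theta ((τ + (k:ℂ))/3) z)

def B4 (τ : ℂ) (z : Fin 8 → ℂ) : ℂ :=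
  (16/15) * (th4 0 (2*τ) ^ 4 * Theta (4*τ) (fun i => 4 * z i)
    - (1/2^4) * th4 0 (2*τ) ^ 4 * Theta (τ + 1/2) (fun i => 2 * z i)
    - (1/(2^2 * 4^4)) * ∑ k ∈ Finset.range 4, th2 0 ((τ + (k:ℂ))/2) ^ 4 * Theta ((τ + (k:ℂ))/4) z)

def B6 (τ : ℂ) (z : Fin 8 → ℂ) : ℂ :=
  (9/10) * (h0 τ ^ 2 * Theta (6*τ) (fun i => 6 * z i)
    + (1/2^4) * ∑ k ∈ Finset.range 2, h0 (τ + (k:ℂ)) ^ 2 * Theta ((3*τ + 3*(k:ℂ))/2) (fun i => 3 * z i)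
    - (1/(3 * 3^4)) * ∑ k ∈ Finset.range 3, h0 ((τ + (k:ℂ))/3) ^ 2 * Theta ((2*τ + 2*(k:ℂ))/3) (fun i => 2 * z i)
    - (1/(3 * 6^4)) * ∑ k ∈ Finset.range 6, h0 ((τ + (k:ℂ))/3) ^ 2 * Theta ((τ + (k:ℂ))/6) z)

/-- The nine basic W(E8)-invariant holomorphic Jacobi forms A1,…,A5,B2,…,B6. -/
def nineForms : Fin 9 → ℂ → (Fin 8 → ℂ) → ℂ := ![A1, A2, A3, A4, A5, B2, B3, B4, B6]

/- The basic meromorphic Jacobi forms a_i, b_j (Appendix A of the paper). -/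

def a0f (τ : ℂ) (_z : Fin 8 → ℂ) : ℂ := E4 τ / 12

def a2f (τ : ℂ) (z : Fin 8 → ℂ) : ℂ :=
  6 / (E4 τ * Dl τ) * (-(E4 τ) * A2 τ z + A1 τ z ^ 2)

def a3f (τ : ℂ) (z : Fin 8 → ℂ) : ℂ :=
  1 / (9 * E4 τ ^ 2 * Dl τ ^ 2) *
    (-7 * E4 τ ^ 2 * E6 τ * A3 τ z - 20 * E4 τ ^ 3 * B3 τ z
      - 9 * E4 τ * E6 τ * A1 τ z * A2 τ z + 30 * E4 τ ^ 2 * A1 τ z * B2 τ z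
      + 6 * E6 τ * A1 τ z ^ 3)

def a4f (τ : ℂ) (z : Fin 8 → ℂ) : ℂ :=
  1 / (288 * E4 τ ^ 3 * Dl τ ^ 3) *
    (576 * E4 τ ^ 3 * Dl τ * A4 τ z + 32256 * E4 τ ^ 2 * Dl τ * A1 τ z * A3 τ z
      - 9 * E4 τ ^ 5 * A2 τ z ^ 2 - 30 * E4 τ ^ 3 * E6 τ * A2 τ z * B2 τ z
      - 25 * E4 τ ^ 4 * B2 τ z ^ 2
      + (60 * E4 τ ^ 4 - 12 * E4 τ * E6 τ ^ 2) * A1 τ z ^ 2 * A2 τ z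
      + 80 * E4 τ ^ 2 * E6 τ * A1 τ z ^ 2 * B2 τ z
      + (-70 * E4 τ ^ 3 + 6 * E6 τ ^ 2) * A1 τ z ^ 4)

def b0f (τ : ℂ) (_z : Fin 8 → ℂ) : ℂ := E6 τ / 216

def b1f (τ : ℂ) (z : Fin 8 → ℂ) : ℂ := -4 / E4 τ * A1 τ z

def b2f (τ : ℂ) (z : Fin 8 → ℂ) : ℂ :=
  5 / (6 * E4 τ ^ 2 * Dl τ) * (E4 τ ^ 2 * B2 τ z - E6 τ * A1 τ z ^ 2)

def b3f (τ : ℂ) (z : Fin 8 → ℂ) : ℂ :=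
  1 / (108 * E4 τ ^ 3 * Dl τ ^ 2) *
    (-7 * E4 τ ^ 5 * A3 τ z - 20 * E4 τ ^ 3 * E6 τ * B3 τ z
      - 9 * E4 τ ^ 4 * A1 τ z * A2 τ z + 30 * E4 τ ^ 2 * E6 τ * A1 τ z * B2 τ z
      + (16 * E4 τ ^ 3 - 10 * E6 τ ^ 2) * A1 τ z ^ 3)

def b4f (τ : ℂ) (z : Fin 8 → ℂ) : ℂ :=
  1 / (1728 * E4 τ ^ 4 * Dl τ ^ 3) *
    (-8640 * E4 τ ^ 4 * Dl τ * B4 τ z + 138240 * E4 τ ^ 3 * Dl τ * A1 τ z * B3 τ z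
      + 9 * E4 τ ^ 5 * E6 τ * A2 τ z ^ 2 + 30 * E4 τ ^ 6 * A2 τ z * B2 τ z
      + 25 * E4 τ ^ 4 * E6 τ * B2 τ z ^ 2
      - 48 * E4 τ ^ 4 * E6 τ * A1 τ z ^ 2 * A2 τ z
      + (-140 * E4 τ ^ 5 + 60 * E4 τ ^ 2 * E6 τ ^ 2) * A1 τ z ^ 2 * B2 τ z
      + (74 * E4 τ ^ 3 * E6 τ - 10 * E6 τ ^ 3) * A1 τ z ^ 4)

def b5f (τ : ℂ) (z : Fin 8 → ℂ) : ℂ :=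
  1 / (72 * E4 τ ^ 5 * Dl τ ^ 3) *
    (-36288 * E4 τ ^ 4 * Dl τ * A5 τ z - 294 * E4 τ ^ 6 * A2 τ z * A3 τ z
      - 770 * E4 τ ^ 4 * E6 τ * B2 τ z * A3 τ z - 840 * E4 τ ^ 4 * E6 τ * A2 τ z * B3 τ z
      - 2200 * E4 τ ^ 5 * B2 τ z * B3 τ z + 168 * E4 τ ^ 5 * A1 τ z ^ 2 * A3 τ z
      + 480 * E4 τ ^ 3 * E6 τ * A1 τ z ^ 2 * B3 τ z - 621 * E4 τ ^ 5 * A1 τ z * A2 τ z ^ 2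
      + 3525 * E4 τ ^ 4 * A1 τ z * B2 τ z ^ 2 + 1224 * E4 τ ^ 4 * A1 τ z ^ 3 * A2 τ z
      - 240 * E4 τ ^ 2 * E6 τ * A1 τ z ^ 3 * B2 τ z
      + (-456 * E4 τ ^ 3 + 24 * E6 τ ^ 2) * A1 τ z ^ 5)

def b6f (τ : ℂ) (z : Fin 8 → ℂ) : ℂ :=
  1 / (4478976 * E4 τ ^ 6 * Dl τ ^ 5) *
    (-19906560 * E4 τ ^ 6 * Dl τ ^ 2 * B6 τ z
      - 188116992 * E4 τ ^ 4 * E6 τ * Dl τ ^ 2 * A1 τ z * A5 τ z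
      - 5184 * E4 τ ^ 7 * E6 τ * Dl τ * A2 τ z * A4 τ z
      - 8640 * E4 τ ^ 8 * Dl τ * B2 τ z * A4 τ z
      - 103680 * E4 τ ^ 8 * Dl τ * A2 τ z * B4 τ z
      - 172800 * E4 τ ^ 6 * E6 τ * Dl τ * B2 τ z * B4 τ z
      + 12672 * E4 τ ^ 6 * E6 τ * Dl τ * A1 τ z ^ 2 * A4 τ z
      + 17280 * (5 * E4 τ ^ 7 + 9 * E4 τ ^ 4 * E6 τ ^ 2) * Dl τ * A1 τ z ^ 2 * B4 τ z
      + 112896 * E4 τ ^ 7 * E6 τ * Dl τ * A3 τ z ^ 2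
      + 645120 * E4 τ ^ 8 * Dl τ * A3 τ z * B3 τ z
      + 921600 * E4 τ ^ 6 * E6 τ * Dl τ * B3 τ z ^ 2
      - 1717632 * E4 τ ^ 6 * E6 τ * Dl τ * A1 τ z * A2 τ z * A3 τ z
      - 362880 * (4 * E4 τ ^ 7 + 11 * E4 τ ^ 4 * E6 τ ^ 2) * Dl τ * A1 τ z * B2 τ z * A3 τ z
      + 483840 * (4 * E4 τ ^ 7 - 9 * E4 τ ^ 4 * E6 τ ^ 2) * Dl τ * A1 τ z * A2 τ z * B3 τ z
      - 11404800 * E4 τ ^ 5 * E6 τ * Dl τ * A1 τ z * B2 τ z * B3 τ z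
      + 1161216 * E4 τ ^ 5 * E6 τ * Dl τ * A1 τ z ^ 3 * A3 τ z
      - 92160 * (37 * E4 τ ^ 6 - 9 * E4 τ ^ 3 * E6 τ ^ 2) * Dl τ * A1 τ z ^ 3 * B3 τ z
      + (135 * E4 τ ^ 9 * E6 τ + 54 * E4 τ ^ 6 * E6 τ ^ 3) * A2 τ z ^ 3
      + (405 * E4 τ ^ 10 + 540 * E4 τ ^ 7 * E6 τ ^ 2) * A2 τ z ^ 2 * B2 τ z
      + 1575 * E4 τ ^ 8 * E6 τ * A2 τ z * B2 τ z ^ 2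
      + (375 * E4 τ ^ 9 + 500 * E4 τ ^ 6 * E6 τ ^ 2) * B2 τ z ^ 3
      + (-3159 * E4 τ ^ 8 * E6 τ + 1701 * E4 τ ^ 5 * E6 τ ^ 3) * A1 τ z ^ 2 * A2 τ z ^ 2
      + (-3060 * E4 τ ^ 9 - 1800 * E4 τ ^ 6 * E6 τ ^ 2) * A1 τ z ^ 2 * A2 τ z * B2 τ z
      + (6975 * E4 τ ^ 7 * E6 τ - 11025 * E4 τ ^ 4 * E6 τ ^ 3) * A1 τ z ^ 2 * B2 τ z ^ 2
      + (6768 * E4 τ ^ 7 * E6 τ - 3024 * E4 τ ^ 4 * E6 τ ^ 3) * A1 τ z ^ 4 * A2 τ z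
      + (4260 * E4 τ ^ 8 + 1800 * E4 τ ^ 5 * E6 τ ^ 2 + 180 * E4 τ ^ 2 * E6 τ ^ 4) * A1 τ z ^ 4 * B2 τ z
      + (-3692 * E4 τ ^ 6 * E6 τ + 504 * E4 τ ^ 3 * E6 τ ^ 3 - 12 * E6 τ ^ 5) * A1 τ z ^ 6)

/-- The Seiberg–Witten coefficients a_0, …, a_4 (a_1 = 0). -/
def aSW : ℕ → ℂ → (Fin 8 → ℂ) → ℂ
  | 0 => a0f
  | 2 => a2f
  | 3 => a3f
  | 4 => a4f
  | _ => fun _ _ => 0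

/-- The Seiberg–Witten coefficients b_0, …, b_6. -/
def bSW : ℕ → ℂ → (Fin 8 → ℂ) → ℂ
  | 0 => b0f
  | 1 => b1f
  | 2 => b2f
  | 3 => b3f
  | 4 => b4f
  | 5 => b5f
  | 6 => b6f
  | _ => fun _ _ => 0

/-- The translation parameter −b₁/(6b₀). -/
def uShift (τ : ℂ) (z : Fin 8 → ℂ) : ℂ := -(bSW 1 τ z) / (6 * bSW 0 τ z)

/-- The coefficients c_i. -/
def cSW (i : ℕ) (τ : ℂ) (z : Fin 8 → ℂ) : ℂ :=
  ∑ j ∈ Finset.range (i+1), aSW j τ z * (Nat.choose (4-j) (4-i) : ℂ) * uShift τ z ^ (i-j)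

/-- The coefficients d_j. -/
def dSW (j : ℕ) (τ : ℂ) (z : Fin 8 → ℂ) : ℂ :=
  ∑ l ∈ Finset.range (j+1), bSW l τ z * (Nat.choose (6-l) (6-j) : ℂ) * uShift τ z ^ (j-l)

/-- Points of the upper half-plane avoiding the zeros of E4, E6 and Δ
(where all the meromorphic Jacobi forms above are defined). -/
def GoodTau (τ : ℂ) : Prop := 0 < τ.im ∧ E4 τ ≠ 0 ∧ E6 τ ≠ 0 ∧ Dl τ ≠ 0

/-- The eleven generators a_0, a_2, a_3, a_4, b_0, …, b_6 of R. -/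
def abGens : Fin 11 → ℂ → (Fin 8 → ℂ) → ℂ :=
  ![aSW 0, aSW 2, aSW 3, aSW 4, bSW 0, bSW 1, bSW 2, bSW 3, bSW 4, bSW 5, bSW 6]

/-- The eleven generators c_0, …, c_4, d_0, d_2, …, d_6 of R̃. -/
def cdGens : Fin 11 → ℂ → (Fin 8 → ℂ) → ℂ :=
  ![cSW 0, cSW 1, cSW 2, cSW 3, cSW 4, dSW 0, dSW 2, dSW 3, dSW 4, dSW 5, dSW 6]

/-- Membership in the polynomial ring R = ℂ[a_0,a_2,a_3,a_4,b_0,…,b_6]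
(as meromorphic functions on ℍ × ℂ^8). -/
def MemR (φ : ℂ → (Fin 8 → ℂ) → ℂ) : Prop :=
  ∃ P : MvPolynomial (Fin 11) ℂ, ∀ τ : ℂ, GoodTau τ → ∀ z,
    φ τ z = MvPolynomial.eval (fun i => abGens i τ z) P

/-- Membership in the polynomial ring R̃ = ℂ[c_0,…,c_4,d_0,d_2,…,d_6]
(as meromorphic functions on ℍ × ℂ^8). -/
def MemRt (φ : ℂ → (Fin 8 → ℂ) → ℂ) : Prop :=
  ∃ P : MvPolynomial (Fin 11) ℂ, ∀ τ : ℂ, GoodTau τ → ∀ z,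
    φ τ z = MvPolynomial.eval (fun i => cdGens i τ z) P

/- Invariant theory of binary forms. -/

/-- `BinTrans n T α α'` says that `α'` is the coefficient family of the degree-`n`
binary form with coefficients `α` transformed by `T ∈ SL2(ℂ)`. -/
def BinTrans (n : ℕ) (T : Matrix (Fin 2) (Fin 2) ℂ) (α α' : ℕ → ℂ) : Prop :=
  ∀ u v : ℂ,
    ∑ j ∈ Finset.range (n+1), α' j * u ^ (n - j) * v ^ j
      = ∑ i ∈ Finset.range (n+1), α i * (T 0 0 * u + T 0 1 * v) ^ (n - i) *
          (T 1 0 * u + T 1 1 * v) ^ i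

/-- Variables for polynomials in the coefficients of a binary quartic and sextic. -/
abbrev SV := Fin 5 ⊕ Fin 7

/-- Evaluation of a polynomial in the coefficients of the quartic and sextic. -/
def evalSV (Φ : MvPolynomial SV ℂ) (α β : ℕ → ℂ) : ℂ :=
  MvPolynomial.eval (Sum.elim (fun i : Fin 5 => α i.1) (fun j : Fin 7 => β j.1)) Φ

/-- Membership in the ring of joint semiinvariants ℂ[V4 ⊕ V6]^{U2(ℂ)}. -/
def IsSemiinvRingElem (Φ : MvPolynomial SV ℂ) : Prop :=
  ∀ κ : ℂ, ∀ α α' β β' : ℕ → ℂ,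
    BinTrans 4 !![1, κ; 0, 1] α α' → BinTrans 6 !![1, κ; 0, 1] β β' →
      evalSV Φ α' β' = evalSV Φ α β

/-- Membership in the ring of joint invariants ℂ[V4 ⊕ V6]^{SL2(ℂ)}. -/
def IsInvRingElem (Φ : MvPolynomial SV ℂ) : Prop :=
  ∀ T : Matrix (Fin 2) (Fin 2) ℂ, T.det = 1 → ∀ α α' β β' : ℕ → ℂ,
    BinTrans 4 T α α' → BinTrans 6 T β β' → evalSV Φ α' β' = evalSV Φ α β

/-- Variables for joint covariants: coefficients of the two forms together with (u,v). -/
abbrev CVV := (Fin 5 ⊕ Fin 7) ⊕ Fin 2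

/-- Evaluation of a polynomial in the coefficients and (u,v). -/
def evalCov (Ψ : MvPolynomial CVV ℂ) (α β : ℕ → ℂ) (u v : ℂ) : ℂ :=
  MvPolynomial.eval
    (Sum.elim (Sum.elim (fun i : Fin 5 => α i.1) (fun j : Fin 7 => β j.1))
      (fun p : Fin 2 => if p = 0 then u else v)) Ψ

/-- Membership in the ring of joint covariants ℂ[V4 ⊕ V6 ⊕ ℂ²]^{SL2(ℂ)}. -/
def IsCovRingElem (Ψ : MvPolynomial CVV ℂ) : Prop :=
  ∀ T : Matrix (Fin 2) (Fin 2) ℂ, T.det = 1 → ∀ α α' β β' : ℕ → ℂ,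
    BinTrans 4 T α α' → BinTrans 6 T β β' → ∀ u v : ℂ,
      evalCov Ψ α' β' u v = evalCov Ψ α β (T 0 0 * u + T 0 1 * v) (T 1 0 * u + T 1 1 * v)

/-- â_i in ℂ[α, β, α₀⁻¹]. -/
def ahat (α : ℕ → ℂ) (i : ℕ) : ℂ :=
  ∑ j ∈ Finset.range (i+1), α j * (Nat.choose (4-j) (4-i) : ℂ) * (-(α 1)/(4 * α 0)) ^ (i-j)

/-- b̂_i in ℂ[α, β, α₀⁻¹]. -/
def bhat (α β : ℕ → ℂ) (i : ℕ) : ℂ :=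
  ∑ j ∈ Finset.range (i+1), β j * (Nat.choose (6-j) (6-i) : ℂ) * (-(α 1)/(4 * α 0)) ^ (i-j)

/-- ĉ_i in ℂ[α, β, β₀⁻¹]. -/
def chat (α β : ℕ → ℂ) (i : ℕ) : ℂ :=
  ∑ j ∈ Finset.range (i+1), α j * (Nat.choose (4-j) (4-i) : ℂ) * (-(β 1)/(6 * β 0)) ^ (i-j)

/-- d̂_i in ℂ[α, β, β₀⁻¹]. -/
def dhat (β : ℕ → ℂ) (i : ℕ) : ℂ :=
  ∑ j ∈ Finset.range (i+1), β j * (Nat.choose (6-j) (6-i) : ℂ) * (-(β 1)/(6 * β 0)) ^ (i-j)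

/-- The images of the eleven generators of R under ψ. -/
def hatGens (α β : ℕ → ℂ) : Fin 11 → ℂ :=
  ![ahat α 0, ahat α 2, ahat α 3, ahat α 4, bhat α β 0, bhat α β 1, bhat α β 2,
    bhat α β 3, bhat α β 4, bhat α β 5, bhat α β 6]

/-- The images of the eleven generators of R̃ under ψ̃. -/
def cdhatGens (α β : ℕ → ℂ) : Fin 11 → ℂ :=
  ![chat α β 0, chat α β 1, chat α β 2, chat α β 3, chat α β 4, dhat β 0, dhat β 2,
    dhat β 3, dhat β 4, dhat β 5, dhat β 6]

/-- Weights picking out the a-variables among the eleven generators. -/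
def wA : Fin 11 → ℕ := ![1, 1, 1, 1, 0, 0, 0, 0, 0, 0, 0]

/-- Weights picking out the b-variables among the eleven generators. -/
def wB : Fin 11 → ℕ := ![0, 0, 0, 0, 1, 1, 1, 1, 1, 1, 1]

/-- Weights picking out the α-variables. -/
def wSVα : SV → ℕ := Sum.elim (fun _ => 1) (fun _ => 0)

/-- Weights picking out the β-variables. -/
def wSVβ : SV → ℕ := Sum.elim (fun _ => 0) (fun _ => 1)

/-- A joint semiinvariant of the quartic and sextic, of degrees (da, db) and order ω. -/
def IsSemiinvOf (Φ : MvPolynomial SV ℂ) (da db : ℕ) (ω : ℤ) : Prop :=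
  MvPolynomial.IsWeightedHomogeneous wSVα Φ da ∧
  MvPolynomial.IsWeightedHomogeneous wSVβ Φ db ∧
  IsSemiinvRingElem Φ ∧
  ∀ l : ℂ, l ≠ 0 → ∀ α α' β β' : ℕ → ℂ,
    BinTrans 4 !![l, 0; 0, l⁻¹] α α' → BinTrans 6 !![l, 0; 0, l⁻¹] β β' →
      evalSV Φ α' β' = l ^ ω * evalSV Φ α β

/-- Substitution α_i ↦ a_i (with a_1 = 0), β_j ↦ b_j into a polynomial in (α, β). -/
def subAB (Φ : MvPolynomial SV ℂ) : ℂ → (Fin 8 → ℂ) → ℂ :=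
  fun τ z => MvPolynomial.eval
    (Sum.elim (fun i : Fin 5 => aSW i.1 τ z) (fun j : Fin 7 => bSW j.1 τ z)) Φ

/-- The graph of the map ψ_J : a Jacobi form φ = Q(a_i, b_j) is sent to the
polynomial Φ = Q(â_i, b̂_j). -/
def PsiJRel (φ : ℂ → (Fin 8 → ℂ) → ℂ) (Φ : MvPolynomial SV ℂ) : Prop :=
  ∃ Q : MvPolynomial (Fin 11) ℂ,
    (∀ τ : ℂ, GoodTau τ → ∀ z, φ τ z = MvPolynomial.eval (fun i => abGens i τ z) Q) ∧
    (∀ α β : ℕ → ℂ, α 0 ≠ 0 → evalSV Φ α β = MvPolynomial.eval (hatGens α β) Q)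

/-- The disc in the complex plane with centre `((a - b) + (c - d) * I) / 2 ^ 64` and radius
`err / 2 ^ 64`. It carries no information when `ok` is `false`. -/
structure Disc where
  ok : Bool
  a : ℕ
  b : ℕ
  c : ℕ
  d : ℕ
  err : ℕ

namespace Disc

/-- An upper bound for the modulus of the centre, in units of `2 ^ (-64)`. -/
def mag (x : Disc) : ℕ := Nat.add (Nat.add x.a x.b) (Nat.add x.c x.d)

/-- The disc of radius zero around a natural number. -/
def ofNat (n : ℕ) : Disc := ⟨true, Nat.mul n 18446744073709551616, 0, 0, 0, 0⟩

/-- A disc containing the fraction `m / n`. -/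
def ofFrac (m n : ℕ) : Disc :=
  ⟨Nat.ble 1 n, Nat.div (Nat.mul m 18446744073709551616) n, 0, 0, 0, 1⟩

def add (x y : Disc) : Disc :=
  ⟨x.ok && y.ok, Nat.add x.a y.a, Nat.add x.b y.b, Nat.add x.c y.c, Nat.add x.d y.d,
    Nat.add x.err y.err⟩

def neg (x : Disc) : Disc := ⟨x.ok, x.b, x.a, x.d, x.c, x.err⟩

/-- The truncated difference of two numbers, divided by `2 ^ 64` and rounded down. -/
def cut (m n : ℕ) : ℕ := Nat.div (Nat.sub m n) 18446744073709551616

def mul (x y : Disc) : Disc :=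
  (fun p n r s =>
    ⟨x.ok && y.ok, cut p n, cut n p, cut r s, cut s r,
      Nat.add (Nat.div (Nat.add (Nat.add (Nat.mul (mag x) y.err) (Nat.mul (mag y) x.err))
        (Nat.mul x.err y.err)) 18446744073709551616) 3⟩)
    (Nat.add (Nat.add (Nat.mul x.a y.a) (Nat.mul x.b y.b))
      (Nat.add (Nat.mul x.c y.d) (Nat.mul x.d y.c)))
    (Nat.add (Nat.add (Nat.mul x.a y.b) (Nat.mul x.b y.a))
      (Nat.add (Nat.mul x.c y.c) (Nat.mul x.d y.d)))
    (Nat.add (Nat.add (Nat.mul x.a y.c) (Nat.mul x.c y.a))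
      (Nat.add (Nat.mul x.b y.d) (Nat.mul x.d y.b)))
    (Nat.add (Nat.add (Nat.mul x.a y.d) (Nat.mul x.d y.a))
      (Nat.add (Nat.mul x.b y.c) (Nat.mul x.c y.b)))

/-- Power by repeated squaring, for exponents below `2 ^ fuel`. -/
def powFuel : ℕ → Disc → ℕ → Disc
  | 0, _, n => ⟨Nat.beq n 0, 18446744073709551616, 0, 0, 0, 0⟩
  | k + 1, x, n =>
    bif Nat.beq n 0 then ofNat 1
    else bif Nat.beq (Nat.mod n 2) 0 then powFuel k (mul x x) (Nat.div n 2)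
    else mul x (powFuel k (mul x x) (Nat.div n 2))

def pow (x : Disc) (n : ℕ) : Disc := powFuel 12 x n

/-- The centre of a disc, multiplied by `2 ^ 64`. -/
def centre (x : Disc) : ℂ := ((x.a : ℂ) - x.b) + ((x.c : ℂ) - x.d) * I

/-- Membership of a complex number in a disc. -/
def Mem (z : ℂ) (x : Disc) : Prop :=
  x.ok = true → ‖z * 18446744073709551616 - x.centre‖ ≤ x.err

theorem nat_div_eq (m n : ℕ) : Nat.div m n = m / n := rfl

theorem cut_eq (m n : ℕ) : cut m n = (m - n) / 18446744073709551616 := rfl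

theorem norm_centre_le (x : Disc) : ‖x.centre‖ ≤ x.mag := by
  have h : ‖x.centre‖ ≤ ‖(x.a : ℂ)‖ + ‖(x.b : ℂ)‖ + (‖(x.c : ℂ)‖ + ‖(x.d : ℂ)‖) := by
    refine (norm_add_le _ _).trans (add_le_add (norm_sub_le _ _) ?_)
    rw [norm_mul, norm_I, mul_one]
    exact norm_sub_le _ _
  simpa [mag] using h

theorem Mem.norm_le {z : ℂ} {x : Disc} (h : Mem z x) (hx : x.ok = true) :
    ‖z‖ * 18446744073709551616 ≤ x.mag + x.err := by
  have h1 := h hx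
  have h2 : ‖z * 18446744073709551616‖ ≤ ‖x.centre‖ + ‖z * 18446744073709551616 - x.centre‖ := by
    simpa using norm_add_le x.centre (z * 18446744073709551616 - x.centre)
  rw [norm_mul] at h2
  have h3 : ‖(18446744073709551616 : ℂ)‖ = 18446744073709551616 := by simp
  rw [h3] at h2
  linarith [x.norm_centre_le]

theorem mem_ofNat (n : ℕ) : Mem n (ofNat n) := by
  intro _
  simp [ofNat, centre]

theorem mem_one : Mem 1 (ofNat 1) := by simpa using mem_ofNat 1

theorem mem_ofFrac (m n : ℕ) : Mem ((m : ℂ) / n) (ofFrac m n) := by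
  intro h
  have hn : 0 < n := by simpa [ofFrac, Nat.ble_eq, Nat.one_le_iff_ne_zero, Nat.pos_iff_ne_zero] using h
  have hn' : (0 : ℝ) < n := by exact_mod_cast hn
  have key : ((m : ℂ) / n) * 18446744073709551616 - (ofFrac m n).centre
      = (((m * 18446744073709551616 : ℕ) : ℝ) / n
        - ((m * 18446744073709551616 / n : ℕ) : ℝ) : ℝ) := by
    simp [ofFrac, centre, nat_div_eq]
    ring
  rw [key, Complex.norm_real, Real.norm_eq_abs]
  have h1 := Nat.div_add_mod (m * 18446744073709551616) n
  have h2 := Nat.mod_lt (m * 18446744073709551616) hn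
  set t := m * 18446744073709551616
  have h3 : (t : ℝ) / n - ((t / n : ℕ) : ℝ) = ((t % n : ℕ) : ℝ) / n := by
    have : (t : ℝ) = n * ((t / n : ℕ) : ℝ) + ((t % n : ℕ) : ℝ) := by exact_mod_cast h1.symm
    field_simp
    linarith
  rw [h3, abs_of_nonneg (by positivity), div_le_iff₀ hn']
  simp [ofFrac]
  exact h2.le

theorem Mem.add {z w : ℂ} {x y : Disc} (hz : Mem z x) (hw : Mem w y) :
    Mem (z + w) (x.add y) := by
  intro h
  obtain ⟨hx, hy⟩ : x.ok = true ∧ y.ok = true := by simpa [Disc.add] using h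
  have e : (z + w) * 18446744073709551616 - (x.add y).centre
      = (z * 18446744073709551616 - x.centre) + (w * 18446744073709551616 - y.centre) := by
    simp [Disc.add, centre]
    ring
  rw [e]
  refine (norm_add_le _ _).trans ?_
  simpa [Disc.add] using add_le_add (hz hx) (hw hy)

theorem Mem.neg {z : ℂ} {x : Disc} (hz : Mem z x) : Mem (-z) x.neg := by
  intro h
  have e : -z * 18446744073709551616 - x.neg.centre = -(z * 18446744073709551616 - x.centre) := by
    simp [Disc.neg, centre]
    ring
  rw [e, norm_neg]
  exact hz h

theorem abs_cut_sub_cut_le (m n : ℕ) :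
    |((m : ℝ) - n) / 18446744073709551616 - ((cut m n : ℝ) - cut n m)| ≤ 1 := by
  have aux : ∀ k : ℕ, |(k : ℝ) / 18446744073709551616 -
      ((k / 18446744073709551616 : ℕ) : ℝ)| ≤ 1 := by
    intro k
    have h1 := Nat.div_add_mod k 18446744073709551616
    have h2 := Nat.mod_lt k (show 0 < 18446744073709551616 by norm_num)
    have h3 : (k : ℝ) = 18446744073709551616 * ((k / 18446744073709551616 : ℕ) : ℝ)
      + ((k % 18446744073709551616 : ℕ) : ℝ) := by exact_mod_cast h1.symm
    have h4 : ((k % 18446744073709551616 : ℕ) : ℝ) ≤ 18446744073709551616 := by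
      exact_mod_cast h2.le
    have h5 : (0 : ℝ) ≤ ((k % 18446744073709551616 : ℕ) : ℝ) := by positivity
    rw [abs_le]
    constructor <;> linarith
  rcases le_total n m with h | h
  · have e1 : cut n m = 0 := by simp [cut_eq, Nat.sub_eq_zero_of_le h]
    have := aux (m - n)
    rw [e1]
    simpa [cut_eq, Nat.cast_sub h] using this
  · have e1 : cut m n = 0 := by simp [cut_eq, Nat.sub_eq_zero_of_le h]
    have := aux (n - m)
    rw [Nat.cast_sub h] at this
    rw [e1, abs_sub_comm]
    convert this using 2
    simp [cut_eq]
    ring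

theorem Mem.mul {z w : ℂ} {x y : Disc} (hz : Mem z x) (hw : Mem w y) :
    Mem (z * w) (x.mul y) := by
  intro h
  obtain ⟨hx, hy⟩ : x.ok = true ∧ y.ok = true := by simpa [Disc.mul] using h
  have h1 := hz hx
  have h2 := hw hy
  set ez := z * 18446744073709551616 - x.centre with hez
  set ew := w * 18446744073709551616 - y.centre with hew
  have e1 : z * w * 18446744073709551616 = (x.centre * y.centre + x.centre * ew
      + y.centre * ez + ez * ew) / 18446744073709551616 := by
    rw [hez, hew]
    ring
  obtain ⟨p, hp⟩ : ∃ p, p = x.a * y.a + x.b * y.b + (x.c * y.d + x.d * y.c) := ⟨_, rfl⟩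
  obtain ⟨n, hn⟩ : ∃ p, p = x.a * y.b + x.b * y.a + (x.c * y.c + x.d * y.d) := ⟨_, rfl⟩
  obtain ⟨r, hr⟩ : ∃ p, p = x.a * y.c + x.c * y.a + (x.b * y.d + x.d * y.b) := ⟨_, rfl⟩
  obtain ⟨s, hs⟩ : ∃ p, p = x.a * y.d + x.d * y.a + (x.b * y.c + x.c * y.b) := ⟨_, rfl⟩
  have e2 : x.centre * y.centre = ((p : ℂ) - n) + ((r : ℂ) - s) * I := by
    rw [hp, hn, hr, hs]
    simp only [centre]
    push_cast
    linear_combination ((x.c : ℂ) - x.d) * (y.c - y.d) * I_sq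
  have e3 : (x.mul y).centre
      = ((cut p n : ℂ) - cut n p) + ((cut r s : ℂ) - cut s r) * I := by
    rw [hp, hn, hr, hs]
    rfl
  have e4 : z * w * 18446744073709551616 - (x.mul y).centre
      = ((((p : ℝ) - n) / 18446744073709551616 - ((cut p n : ℝ) - cut n p) : ℝ) : ℂ)
        + ((((r : ℝ) - s) / 18446744073709551616 - ((cut r s : ℝ) - cut s r) : ℝ) : ℂ) * I
        + (x.centre * ew + y.centre * ez + ez * ew) / 18446744073709551616 := by
    rw [e1, e3, e2]
    push_cast
    ring
  rw [e4]
  have b1 := abs_cut_sub_cut_le p n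
  have b2 := abs_cut_sub_cut_le r s
  have b3 : ‖(x.centre * ew + y.centre * ez + ez * ew) / 18446744073709551616‖
      ≤ ((x.mag * y.err + y.mag * x.err + x.err * y.err : ℕ) : ℝ) / 18446744073709551616 := by
    rw [norm_div]
    have h3 : ‖(18446744073709551616 : ℂ)‖ = 18446744073709551616 := by simp
    rw [h3]
    refine div_le_div_of_nonneg_right ?_ (by norm_num)
    push_cast
    refine (norm_add_le _ _).trans (add_le_add ((norm_add_le _ _).trans (add_le_add ?_ ?_)) ?_)
      <;> rw [norm_mul]
    · exact mul_le_mul x.norm_centre_le h2 (norm_nonneg _) (by positivity)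
    · exact mul_le_mul y.norm_centre_le h1 (norm_nonneg _) (by positivity)
    · exact mul_le_mul h1 h2 (norm_nonneg _) (by positivity)
  have b4 : ((x.mag * y.err + y.mag * x.err + x.err * y.err : ℕ) : ℝ) / 18446744073709551616
      ≤ ((x.mag * y.err + y.mag * x.err + x.err * y.err) / 18446744073709551616 : ℕ) + 1 := by
    have := abs_cut_sub_cut_le (x.mag * y.err + y.mag * x.err + x.err * y.err) 0
    have e : cut 0 (x.mag * y.err + y.mag * x.err + x.err * y.err) = 0 := by simp [cut_eq]
    rw [e] at this
    have h5 := (abs_le.1 this).2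
    simp only [cut_eq, Nat.sub_zero, Nat.cast_zero, sub_zero] at h5
    linarith
  have e5 : ((x.mul y).err : ℝ)
      = ((x.mag * y.err + y.mag * x.err + x.err * y.err) / 18446744073709551616 : ℕ) + 3 := by
    have : (x.mul y).err
      = (x.mag * y.err + y.mag * x.err + x.err * y.err) / 18446744073709551616 + 3 := rfl
    rw [this]
    push_cast
    rfl
  rw [e5]
  refine (norm_add_le _ _).trans ?_
  have b5 := norm_add_le
    ((((p : ℝ) - n) / 18446744073709551616 - ((cut p n : ℝ) - cut n p) : ℝ) : ℂ)
    (((((r : ℝ) - s) / 18446744073709551616 - ((cut r s : ℝ) - cut s r) : ℝ) : ℂ) * I)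
  rw [norm_mul, norm_I, mul_one, Complex.norm_real, Complex.norm_real, Real.norm_eq_abs,
    Real.norm_eq_abs] at b5
  linarith

theorem Mem.powFuel {z : ℂ} {x : Disc} (hz : Mem z x) (k n : ℕ) :
    Mem (z ^ n) (powFuel k x n) := by
  induction k generalizing z x n with
  | zero =>
    intro h
    have hn : n = 0 := by simpa [Disc.powFuel] using h
    subst hn
    simp [Disc.powFuel, centre]
  | succ k ih =>
    have h2 : z ^ n = z ^ (n % 2) * (z * z) ^ (n / 2) := by
      rw [← pow_two, ← pow_mul, ← pow_add, Nat.mod_add_div]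
    simp only [Disc.powFuel]
    cases hn : Nat.beq n 0
    · cases hm : Nat.beq (Nat.mod n 2) 0
      · have : n % 2 = 1 := by
          have : ¬ n % 2 = 0 := fun h => by
            have h' : Nat.mod n 2 = 0 := h
            simp [h'] at hm
          omega
        rw [h2, this, pow_one]
        exact hz.mul (ih (hz.mul hz) _)
      · have : n % 2 = 0 := Nat.eq_of_beq_eq_true hm
        rw [h2, this, pow_zero, one_mul]
        exact ih (hz.mul hz) _
    · have : n = 0 := Nat.eq_of_beq_eq_true hn
      subst this
      simpa using mem_one

theorem Mem.pow {z : ℂ} {x : Disc} (hz : Mem z x) (n : ℕ) : Mem (z ^ n) (x.pow n) :=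
  hz.powFuel 12 n

/-- A sufficient condition for the inclusion of a disc in another one. -/
def sub (x y : Disc) : Bool :=
  x.ok && Nat.ble (Nat.add x.err
    (Nat.add (Nat.add (Nat.sub (Nat.add x.a y.b) (Nat.add x.b y.a))
        (Nat.sub (Nat.add x.b y.a) (Nat.add x.a y.b)))
      (Nat.add (Nat.sub (Nat.add x.c y.d) (Nat.add x.d y.c))
        (Nat.sub (Nat.add x.d y.c) (Nat.add x.c y.d))))) y.err

theorem abs_cast_sub_cast (m n : ℕ) : |(m : ℝ) - n| = ((m - n : ℕ) : ℝ) + ((n - m : ℕ) : ℝ) := by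
  rcases le_total n m with h | h
  · rw [abs_of_nonneg (by simpa using h), Nat.sub_eq_zero_of_le h, Nat.cast_sub h]
    simp
  · rw [abs_of_nonpos (by simpa using h), Nat.sub_eq_zero_of_le h, Nat.cast_sub h]
    simp

theorem Mem.of_sub {z : ℂ} {x y : Disc} (hz : Mem z x) (h : x.sub y = true) : Mem z y := by
  intro _
  rw [sub, Bool.and_eq_true, Nat.ble_eq] at h
  obtain ⟨hx, h⟩ := h
  have h1 := hz hx
  have e : z * 18446744073709551616 - y.centre = (z * 18446744073709551616 - x.centre)
      + (((((x.a + y.b : ℕ) : ℝ) - (x.b + y.a : ℕ) : ℝ) : ℂ)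
        + ((((x.c + y.d : ℕ) : ℝ) - (x.d + y.c : ℕ) : ℝ) : ℂ) * I) := by
    simp only [centre]
    push_cast
    ring
  rw [e]
  refine (norm_add_le _ _).trans ?_
  have b5 := norm_add_le ((((x.a + y.b : ℕ) : ℝ) - (x.b + y.a : ℕ) : ℝ) : ℂ)
        (((((x.c + y.d : ℕ) : ℝ) - (x.d + y.c : ℕ) : ℝ) : ℂ) * I)
  rw [norm_mul, norm_I, mul_one, Complex.norm_real, Complex.norm_real, Real.norm_eq_abs,
    Real.norm_eq_abs, abs_cast_sub_cast, abs_cast_sub_cast] at b5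
  have h' : ((_ : ℕ) : ℝ) ≤ y.err := Nat.cast_le.2 h
  simp only [Nat.add_eq, Nat.sub_eq, Nat.cast_add (R := ℝ)] at h' b5
  simp only [Nat.cast_add (R := ℝ)] at *
  linarith

end Disc

/-- The general term of the one-sided theta series. -/
def partialTerm (p u : ℂ) (n : ℕ) : ℂ := p ^ (n.choose 2) * u ^ n

/-- The one-sided theta series `∑ p ^ (n (n - 1) / 2) u ^ n`. -/
def partialTheta (p u : ℂ) : ℂ := ∑' n, partialTerm p u n

/-- The image of the one-sided theta series under `u d/du`. -/
def partialThetaDeriv (p u : ℂ) : ℂ := ∑' n : ℕ, (n : ℂ) * partialTerm p u n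

theorem partialTerm_succ (p u : ℂ) (n : ℕ) :
    partialTerm p u (n + 1) = u * partialTerm p (u * p) n := by
  simp only [partialTerm]
  rw [Nat.choose_succ_succ' n 1, Nat.choose_one_right]
  ring

theorem partialTerm_succ' (p u : ℂ) (n : ℕ) :
    partialTerm p u (n + 1) = partialTerm p u n * (u * p ^ n) := by
  simp only [partialTerm]
  rw [Nat.choose_succ_succ' n 1, Nat.choose_one_right]
  ring

theorem summable_partialThetaDeriv {p : ℂ} (hp : ‖p‖ < 1) (u : ℂ) :
    Summable fun n : ℕ => (n : ℂ) * partialTerm p u n := by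
  have ht : Filter.Tendsto (fun n : ℕ => ‖u * p ^ n‖) Filter.atTop (nhds 0) := by
    have := (tendsto_pow_atTop_nhds_zero_of_norm_lt_one hp).const_mul u
    simpa using this.norm
  refine summable_of_ratio_norm_eventually_le (r := 1 / 2) (by norm_num) ?_
  filter_upwards [ht.eventually (gt_mem_nhds (show (0 : ℝ) < 1 / 4 by norm_num)),
    Filter.eventually_ge_atTop 1] with n hn h1
  rw [partialTerm_succ', norm_mul, norm_mul (partialTerm p u n), norm_mul (n : ℂ)]
  have h2 : ‖((n + 1 : ℕ) : ℂ)‖ ≤ 2 * ‖(n : ℂ)‖ := by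
    rw [Complex.norm_natCast, Complex.norm_natCast]
    exact_mod_cast (by omega : n + 1 ≤ 2 * n)
  calc ‖((n + 1 : ℕ) : ℂ)‖ * (‖partialTerm p u n‖ * ‖u * p ^ n‖)
      ≤ (2 * ‖(n : ℂ)‖) * (‖partialTerm p u n‖ * (1 / 4)) := by gcongr
    _ = 1 / 2 * (‖(n : ℂ)‖ * ‖partialTerm p u n‖) := by ring

theorem summable_partialTheta {p : ℂ} (hp : ‖p‖ < 1) (u : ℂ) : Summable (partialTerm p u) := by
  have h := summable_partialThetaDeriv hp u
  rw [← summable_nat_add_iff 1] at h ⊢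
  refine Summable.of_norm_bounded h.norm fun n => ?_
  rw [norm_mul]
  refine le_mul_of_one_le_left (norm_nonneg _) ?_
  rw [Complex.norm_natCast]
  simp

theorem partialTheta_eq {p : ℂ} (hp : ‖p‖ < 1) (u : ℂ) :
    partialTheta p u = 1 + u * partialTheta p (u * p) := by
  rw [partialTheta, (summable_partialTheta hp u).tsum_eq_zero_add]
  simp only [partialTerm_succ, tsum_mul_left]
  simp [partialTerm, partialTheta]

theorem partialThetaDeriv_eq {p : ℂ} (hp : ‖p‖ < 1) (u : ℂ) :
    partialThetaDeriv p u
      = u * (partialTheta p (u * p) + partialThetaDeriv p (u * p)) := by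
  rw [partialThetaDeriv, (summable_partialThetaDeriv hp u).tsum_eq_zero_add]
  rw [partialTheta, partialThetaDeriv, ← (summable_partialTheta hp (u * p)).tsum_add
    (summable_partialThetaDeriv hp (u * p)), ← tsum_mul_left]
  simp only [partialTerm_succ, Nat.cast_zero, zero_mul, zero_add]
  congr 1
  ext n
  push_cast
  ring

theorem norm_partialTerm_le {p u : ℂ} (hp : ‖p‖ < 1) (n : ℕ) : ‖partialTerm p u n‖ ≤ ‖u‖ ^ n := by
  rw [partialTerm, norm_mul, norm_pow, norm_pow]
  exact mul_le_of_le_one_left (by positivity) (pow_le_one₀ (norm_nonneg _) hp.le)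

theorem norm_partialThetaDeriv_le {p u : ℂ} (hp : ‖p‖ < 1) (hu : ‖u‖ ≤ 1 / 4) :
    ‖partialThetaDeriv p u‖ ≤ 2 * ‖u‖ := by
  have hu1 : ‖u‖ < 1 := by linarith
  have hs := hasSum_coe_mul_geometric_of_norm_lt_one (r := ‖u‖) (by simpa using hu1)
  have h : ‖partialThetaDeriv p u‖ ≤ ‖u‖ / (1 - ‖u‖) ^ 2 := by
    refine tsum_of_norm_bounded hs fun n => ?_
    rw [norm_mul, Complex.norm_natCast]
    gcongr
    exact norm_partialTerm_le hp n
  refine h.trans ?_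
  have h2 : (9 / 16 : ℝ) ≤ (1 - ‖u‖) ^ 2 := by nlinarith
  rw [div_le_iff₀ (by linarith)]
  nlinarith [norm_nonneg u]

theorem norm_partialTheta_sub_one_le {p u : ℂ} (hp : ‖p‖ < 1) (hu : ‖u‖ ≤ 1 / 4) :
    ‖partialTheta p u - 1‖ ≤ 2 * ‖u‖ := by
  have hu1 : ‖u‖ < 1 := by linarith
  have hs := (hasSum_geometric_of_norm_lt_one (ξ := ‖u‖) (by simpa using hu1)).mul_left ‖u‖
  have h : ‖∑' n, partialTerm p u (n + 1)‖ ≤ ‖u‖ * (1 - ‖u‖)⁻¹ := by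
    refine tsum_of_norm_bounded hs fun n => ?_
    refine (norm_partialTerm_le hp _).trans_eq ?_
    ring
  rw [partialTheta, (summable_partialTheta hp u).tsum_eq_zero_add]
  have e : partialTerm p u 0 = 1 := by simp [partialTerm]
  rw [e, add_sub_cancel_left]
  refine h.trans ?_
  rw [← div_eq_mul_inv, div_le_iff₀ (by linarith)]
  nlinarith [norm_nonneg u]

/-- The nome `exp (π i τ)`. -/
def nome (τ : ℂ) : ℂ := cexp (Real.pi * I * τ)

theorem nome_add (a b : ℂ) : nome (a + b) = nome a * nome b := by
  rw [nome, nome, nome, ← Complex.exp_add]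
  ring_nf

theorem nome_nat_mul (n : ℕ) (a : ℂ) : nome (n * a) = nome a ^ n := by
  rw [nome, nome, ← Complex.exp_nat_mul]
  ring_nf

theorem nome_neg (a : ℂ) : nome (-a) = (nome a)⁻¹ := by
  rw [nome, nome, ← Complex.exp_neg]
  ring_nf

theorem nome_ne_zero (a : ℂ) : nome a ≠ 0 := Complex.exp_ne_zero _

theorem norm_nome (τ : ℂ) : ‖nome τ‖ = Real.exp (-Real.pi * τ.im) := by
  rw [nome, Complex.norm_exp]
  congr 1
  simp

theorem norm_nome_lt_one {τ : ℂ} (h : 0 < τ.im) : ‖nome τ‖ < 1 := by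
  rw [norm_nome, Real.exp_lt_one_iff]
  nlinarith [Real.pi_pos]

theorem norm_nome_sq_lt_one {τ : ℂ} (h : 0 < τ.im) : ‖nome τ ^ 2‖ < 1 := by
  rw [norm_pow]
  exact pow_lt_one₀ (norm_nonneg _) (norm_nome_lt_one h) two_ne_zero

theorem jacobiTheta₂_term_natCast (n : ℕ) (z τ : ℂ) :
    jacobiTheta₂_term n z τ = partialTerm (nome τ ^ 2) (nome τ * nome (2 * z)) n := by
  have h : n + 2 * n.choose 2 = n * n := by
    induction n with
    | zero => rfl
    | succ n ih =>
      rw [Nat.choose_succ_succ' n 1, Nat.choose_one_right]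
      linarith
  rw [partialTerm, mul_pow, ← pow_mul, ← mul_assoc, ← pow_add, add_comm, h, ← nome_nat_mul,
    ← nome_nat_mul, ← nome_add, jacobiTheta₂_term, nome]
  congr 1
  push_cast
  ring

theorem jacobiTheta₂_term_neg (n : ℤ) (z τ : ℂ) :
    jacobiTheta₂_term (-n) z τ = jacobiTheta₂_term n (-z) τ := by
  simp only [jacobiTheta₂_term]
  congr 1
  push_cast
  ring

theorem jacobiTheta₂_eq {τ : ℂ} (h : 0 < τ.im) (z : ℂ) :
    jacobiTheta₂ z τ = partialTheta (nome τ ^ 2) (nome τ * nome (2 * z))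
      + partialTheta (nome τ ^ 2) (nome τ * nome (-(2 * z))) - 1 := by
  have hp := norm_nome_sq_lt_one h
  have h1 : HasSum (fun n : ℕ => jacobiTheta₂_term n z τ)
      (partialTheta (nome τ ^ 2) (nome τ * nome (2 * z))) := by
    simp only [jacobiTheta₂_term_natCast]
    exact (summable_partialTheta hp _).hasSum
  have h2 : HasSum (fun n : ℕ => jacobiTheta₂_term (-(n : ℤ)) z τ)
      (partialTheta (nome τ ^ 2) (nome τ * nome (-(2 * z)))) := by
    simp only [jacobiTheta₂_term_neg, jacobiTheta₂_term_natCast, mul_neg]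
    exact (summable_partialTheta hp _).hasSum
  have h3 := HasSum.of_nat_of_neg (f := fun n : ℤ => jacobiTheta₂_term n z τ) h1 h2
  rw [(hasSum_jacobiTheta₂_term z h).unique h3]
  simp [jacobiTheta₂_term]

theorem jacobiTheta₂'_eq {τ : ℂ} (h : 0 < τ.im) (z : ℂ) :
    jacobiTheta₂' z τ = 2 * Real.pi * I *
      (partialThetaDeriv (nome τ ^ 2) (nome τ * nome (2 * z))
        - partialThetaDeriv (nome τ ^ 2) (nome τ * nome (-(2 * z)))) := by
  have hp := norm_nome_sq_lt_one h
  have h1 : HasSum (fun n : ℕ => jacobiTheta₂'_term n z τ)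
      (2 * Real.pi * I * partialThetaDeriv (nome τ ^ 2) (nome τ * nome (2 * z))) := by
    have e : (fun n : ℕ => jacobiTheta₂'_term n z τ) = fun n : ℕ => 2 * Real.pi * I *
        ((n : ℂ) * partialTerm (nome τ ^ 2) (nome τ * nome (2 * z)) n) := by
      funext n
      rw [jacobiTheta₂'_term, jacobiTheta₂_term_natCast, Int.cast_natCast]
      ring
    rw [e]
    exact (summable_partialThetaDeriv hp _).hasSum.mul_left _
  have h2 : HasSum (fun n : ℕ => jacobiTheta₂'_term (-(n : ℤ)) z τ)
      (-(2 * Real.pi * I) * partialThetaDeriv (nome τ ^ 2) (nome τ * nome (-(2 * z)))) := by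
    have e : (fun n : ℕ => jacobiTheta₂'_term (-(n : ℤ)) z τ) = fun n : ℕ => -(2 * Real.pi * I) *
        ((n : ℂ) * partialTerm (nome τ ^ 2) (nome τ * nome (-(2 * z))) n) := by
      funext n
      rw [jacobiTheta₂'_term, jacobiTheta₂_term_neg, jacobiTheta₂_term_natCast, Int.cast_neg,
        Int.cast_natCast, mul_neg]
      ring_nf
    rw [e]
    exact (summable_partialThetaDeriv hp _).hasSum.mul_left _
  have h3 := HasSum.of_nat_of_neg (f := fun n : ℤ => jacobiTheta₂'_term n z τ) h1 h2
  rw [(hasSum_jacobiTheta₂'_term z h).unique h3]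
  simp [jacobiTheta₂'_term]
  ring

namespace Disc

/-- Discs for the one-sided theta series and its derivative, from `fuel` steps of the functional
equation. -/
def partialTheta : ℕ → Disc → Disc → Disc × Disc
  | 0, _, u =>
    (⟨u.ok && Nat.ble (Nat.mul 4 (Nat.add (mag u) u.err)) 18446744073709551616,
        18446744073709551616, 0, 0, 0, Nat.mul 2 (Nat.add (mag u) u.err)⟩,
     ⟨u.ok && Nat.ble (Nat.mul 4 (Nat.add (mag u) u.err)) 18446744073709551616,
        0, 0, 0, 0, Nat.mul 2 (Nat.add (mag u) u.err)⟩)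
  | k + 1, p, u =>
    (fun r : Disc × Disc => (add (ofNat 1) (mul u r.1), mul u (add r.1 r.2)))
      (partialTheta k p (mul u p))

theorem mem_partialTheta {p : ℂ} {P : Disc} (hp : ‖p‖ < 1) (hP : Mem p P) (k : ℕ) {u : ℂ}
    {U : Disc} (hU : Mem u U) :
    Mem (E8Jacobi.partialTheta p u) (partialTheta k P U).1 ∧
      Mem (partialThetaDeriv p u) (partialTheta k P U).2 := by
  induction k generalizing u U with
  | zero =>
    have key : (U.ok && Nat.ble (Nat.mul 4 (Nat.add (mag U) U.err)) 18446744073709551616) = true →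
        ‖u‖ ≤ 1 / 4 ∧ ‖u‖ * 18446744073709551616 ≤ U.mag + U.err := by
      intro h
      rw [Bool.and_eq_true, Nat.ble_eq] at h
      have h1 := hU.norm_le h.1
      have h2 : (4 : ℝ) * (U.mag + U.err) ≤ 18446744073709551616 := by exact_mod_cast h.2
      exact ⟨by linarith, h1⟩
    constructor
    · intro h
      obtain ⟨h1, h2⟩ := key h
      have h3 := norm_partialTheta_sub_one_le hp h1
      have e : E8Jacobi.partialTheta p u * 18446744073709551616 - (partialTheta 0 P U).1.centre
          = (E8Jacobi.partialTheta p u - 1) * 18446744073709551616 := by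
        simp [partialTheta, centre]
        ring
      rw [e, norm_mul]
      have e2 : ((partialTheta 0 P U).1.err : ℝ) = 2 * (U.mag + U.err) := by
        simp [partialTheta]
      rw [e2]
      have h4 : ‖(18446744073709551616 : ℂ)‖ = 18446744073709551616 := by simp
      rw [h4]
      linarith
    · intro h
      obtain ⟨h1, h2⟩ := key h
      have h3 := norm_partialThetaDeriv_le hp h1
      have e : partialThetaDeriv p u * 18446744073709551616 - (partialTheta 0 P U).2.centre
          = partialThetaDeriv p u * 18446744073709551616 := by
        simp [partialTheta, centre]
      rw [e, norm_mul]
      have e2 : ((partialTheta 0 P U).2.err : ℝ) = 2 * (U.mag + U.err) := by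
        simp [partialTheta]
      rw [e2]
      have h4 : ‖(18446744073709551616 : ℂ)‖ = 18446744073709551616 := by simp
      rw [h4]
      linarith
  | succ k ih =>
    obtain ⟨h1, h2⟩ := ih (hU.mul hP)
    rw [partialTheta_eq hp, partialThetaDeriv_eq hp]
    exact ⟨mem_one.add (hU.mul h1), hU.mul (h1.add h2)⟩

/-- Discs for the theta series `∑ p ^ (n (n - 1) / 2) u ^ n` over the integers and its logarithmic
derivative, where `u * v = p`. -/
def theta (fuel : ℕ) (p u v : Disc) : Disc × Disc :=
  (fun r s : Disc × Disc =>
    (add (add r.1 s.1) ⟨true, 0, 18446744073709551616, 0, 0, 0⟩, add r.2 (neg s.2)))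
    (partialTheta fuel p u) (partialTheta fuel p v)

theorem mem_theta {τ : ℂ} (hτ : 0 < τ.im) (z : ℂ) (k : ℕ) {P U V : Disc}
    (hP : Mem (E8Jacobi.nome τ ^ 2) P)
    (hU : Mem (E8Jacobi.nome τ * E8Jacobi.nome (2 * z)) U)
    (hV : Mem (E8Jacobi.nome τ * E8Jacobi.nome (-(2 * z))) V) :
    Mem (jacobiTheta₂ z τ) (theta k P U V).1 ∧
      Mem (jacobiTheta₂' z τ / (2 * Real.pi * I)) (theta k P U V).2 := by
  have hp := norm_nome_sq_lt_one hτ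
  obtain ⟨h1, h2⟩ := mem_partialTheta hp hP k hU
  obtain ⟨h3, h4⟩ := mem_partialTheta hp hP k hV
  have hm : Mem (-1) ⟨true, 0, 18446744073709551616, 0, 0, 0⟩ := by
    intro _
    simp [centre]
  constructor
  · rw [jacobiTheta₂_eq hτ, sub_eq_add_neg]
    exact (h1.add h3).add hm
  · rw [jacobiTheta₂'_eq hτ, mul_div_cancel_left₀ _ Complex.two_pi_I_ne_zero, sub_eq_add_neg]
    exact h2.add h4.neg

end Disc

theorem hasSum_mul {α β : Type*} {f : α → ℂ} {g : β → ℂ} {a b : ℂ} (hf : HasSum f a)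
    (hg : HasSum g b) : HasSum (fun p : α × β => f p.1 * g p.2) (a * b) := by
  have h1 := hf.summable.norm
  have h2 := hg.summable.norm
  have h3 : Summable fun p : α × β => f p.1 * g p.2 := by
    apply summable_mul_of_summable_norm h1 h2
  exact hf.mul hg h3

theorem hasSum_fin_prod (n : ℕ) (f : Fin n → ℤ → ℂ) (hf : ∀ i, Summable (f i)) :
    HasSum (fun x : Fin n → ℤ => ∏ i, f i (x i)) (∏ i, ∑' k, f i k) := by
  induction n with
  | zero =>
    simp only [Finset.univ_eq_empty, Finset.prod_empty]
    exact hasSum_unique _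
  | succ n ih =>
    have h := ih (fun i => f i.succ) fun i => hf i.succ
    have h2 := hasSum_mul (hf 0).hasSum h
    rw [← (Fin.consEquiv fun _ : Fin (n + 1) => ℤ).hasSum_iff]
    rw [Fin.prod_univ_succ]
    convert h2 using 1
    funext p
    simp [Fin.prod_univ_succ, Fin.consEquiv]

/-- The integral vectors with even coordinate sum. -/
def evenVec : Set (Fin 8 → ℤ) := {n | Even (∑ i, n i)}

/-- The vector `n - s` as a real vector. -/
def shiftVec (s : ℝ) (n : Fin 8 → ℤ) : Fin 8 → ℝ := fun i => n i - s

theorem shiftVec_injective (s : ℝ) : Function.Injective (shiftVec s) := by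
  intro m n h
  funext i
  have := congrFun h i
  simpa [shiftVec] using this

theorem E8Lattice_eq : E8Lattice = shiftVec 0 '' evenVec ∪ shiftVec (1 / 2) '' evenVec := by
  ext x
  constructor
  · rintro ⟨h | h, m, hm⟩
    · choose n hn using h
      refine Or.inl ⟨n, ?_, ?_⟩
      · refine ⟨m, ?_⟩
        simp only [hn] at hm
        rw [← two_mul]
        exact_mod_cast hm
      · funext i
        simp [shiftVec, hn]
    · choose n hn using h
      refine Or.inr ⟨fun i => n i + 1, ?_, ?_⟩
      · refine ⟨m + 2, ?_⟩
        simp only [hn, Finset.sum_add_distrib] at hm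
        have h2 : ((∑ i, (n i + 1) : ℤ) : ℝ) = ((m + 2 + (m + 2) : ℤ) : ℝ) := by
          push_cast [Finset.sum_add_distrib]
          simp at hm ⊢
          linarith
        exact_mod_cast h2
      · funext i
        simp only [shiftVec, hn]
        push_cast
        ring
  · rintro (⟨n, ⟨k, hk⟩, rfl⟩ | ⟨n, ⟨k, hk⟩, rfl⟩)
    · refine ⟨Or.inl fun i => ⟨n i, by simp [shiftVec]⟩, k, ?_⟩
      simp only [shiftVec, sub_zero]
      rw [two_mul]
      exact_mod_cast hk
    · refine ⟨Or.inr fun i => ⟨n i - 1, by simp [shiftVec]; ring⟩, k - 2, ?_⟩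
      have h2 : (∑ i, (n i : ℝ)) = k + k := by exact_mod_cast hk
      simp only [shiftVec, Finset.sum_sub_distrib, h2]
      simp
      ring

theorem disjoint_shiftVec :
    Disjoint (shiftVec 0 '' evenVec) (shiftVec (1 / 2) '' evenVec) := by
  rw [Set.disjoint_left]
  rintro _ ⟨n, -, rfl⟩ ⟨m, -, h⟩
  have h0 := congrFun h 0
  simp only [shiftVec] at h0
  have h2 : ((2 * m 0 - 1 : ℤ) : ℝ) = ((2 * n 0 : ℤ) : ℝ) := by
    push_cast
    linarith
  have h3 : 2 * m 0 - 1 = 2 * n 0 := by exact_mod_cast h2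
  omega

/-- The product of eight theta functions with arguments `z i + s`. -/
def thetaProd (τ : ℂ) (z : Fin 8 → ℂ) (s : ℂ) : ℂ := ∏ i, jacobiTheta₂ (z i + s) τ

theorem hasSum_evenVec {τ : ℂ} (hτ : 0 < τ.im) (z : Fin 8 → ℂ) (s : ℂ) :
    HasSum (fun n : evenVec => ∏ i, jacobiTheta₂_term (n.1 i) (z i + s) τ)
      ((thetaProd τ z s + thetaProd τ z (s + 1 / 2)) / 2) := by
  have h1 := hasSum_fin_prod 8 (fun i k => jacobiTheta₂_term k (z i + s) τ)
    fun i => (summable_jacobiTheta₂_term_iff _ _).mpr hτ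
  have h2 := hasSum_fin_prod 8 (fun i k => jacobiTheta₂_term k (z i + (s + 1 / 2)) τ)
    fun i => (summable_jacobiTheta₂_term_iff _ _).mpr hτ
  have h3 := (h1.add h2).div_const 2
  refine (hasSum_subtype_iff_indicator (s := evenVec)
    (f := fun n : Fin 8 → ℤ => ∏ i, jacobiTheta₂_term (n i) (z i + s) τ)).mpr ?_
  refine Eq.mp (congrArg (fun f => HasSum f _) ?_) h3
  funext n
  have e : ∏ i, jacobiTheta₂_term (n i) (z i + (s + 1 / 2)) τ
      = (-1) ^ (∑ i, n i) * ∏ i, jacobiTheta₂_term (n i) (z i + s) τ := by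
    rw [← Complex.exp_pi_mul_I, ← Complex.exp_int_mul]
    simp only [jacobiTheta₂_term]
    rw [← Complex.exp_sum, ← Complex.exp_sum, ← Complex.exp_add]
    congr 1
    simp only [Fin.sum_univ_eight]
    push_cast
    ring
  rw [e]
  by_cases h : Even (∑ i, n i)
  · rw [Set.indicator_of_mem (show n ∈ evenVec from h), h.neg_one_zpow]
    ring
  · rw [Set.indicator_of_notMem (show n ∉ evenVec from h),
      (Int.not_even_iff_odd.mp h).neg_one_zpow]
    ring

theorem theta_term_eq (τ : ℂ) (z : Fin 8 → ℂ) (s : ℝ) (n : Fin 8 → ℤ) :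
    cexp (πC * I * τ * dotC (cv (shiftVec s n)) (cv (shiftVec s n))
        + 2 * πC * I * dotC z (cv (shiftVec s n)))
      = nome (8 * s ^ 2 * τ) * nome (-(2 * s) * ∑ i, z i)
        * ∏ i, jacobiTheta₂_term (n i) (z i + -(s * τ)) τ := by
  simp only [jacobiTheta₂_term, nome, πC, dotC, cv, shiftVec]
  rw [← Complex.exp_sum, ← Complex.exp_add, ← Complex.exp_add]
  congr 1
  simp only [Fin.sum_univ_eight]
  push_cast
  ring

theorem hasSum_theta {τ : ℂ} (hτ : 0 < τ.im) (z : Fin 8 → ℂ) :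
    HasSum (fun w : E8Lattice =>
      cexp (πC * I * τ * dotC (cv w.1) (cv w.1) + 2 * πC * I * dotC z (cv w.1)))
      ((thetaProd τ z 0 + thetaProd τ z (1 / 2)) / 2 + nome (2 * τ) * nome (-∑ i, z i) *
        ((thetaProd τ z (-(τ / 2)) + thetaProd τ z (-(τ / 2) + 1 / 2)) / 2)) := by
  set F : (Fin 8 → ℝ) → ℂ := fun w =>
    cexp (πC * I * τ * dotC (cv w) (cv w) + 2 * πC * I * dotC z (cv w)) with hF
  have key (s : ℝ) : HasSum (F ∘ (↑) : (shiftVec s '' evenVec) → ℂ)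
      (nome (8 * s ^ 2 * τ) * nome (-(2 * s) * ∑ i, z i) *
        ((thetaProd τ z (-(s * τ)) + thetaProd τ z (-(s * τ) + 1 / 2)) / 2)) := by
    have h := (hasSum_evenVec hτ z (-(s * τ))).mul_left
      (nome (8 * s ^ 2 * τ) * nome (-(2 * s) * ∑ i, z i))
    rw [← (Equiv.Set.image _ evenVec (shiftVec_injective s)).hasSum_iff]
    refine Eq.mp (congrArg (fun f => HasSum f _) ?_) h
    funext n
    simp only [Function.comp, hF, Equiv.Set.image_apply]
    exact (theta_term_eq τ z s n.1).symm
  have h := (key 0).add_disjoint disjoint_shiftVec (key (1 / 2))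
  rw [← E8Lattice_eq] at h
  refine Eq.mp (congrArg (fun a => HasSum _ a) ?_) h
  have n0 : nome 0 = 1 := by simp [nome]
  have e1 : (8 * ((1 / 2 : ℝ) : ℂ) ^ 2 * τ) = 2 * τ := by
    push_cast
    ring
  have e2 : (-(2 * ((1 / 2 : ℝ) : ℂ)) * ∑ i, z i) = -∑ i, z i := by
    push_cast
    ring
  have e3 : ((1 / 2 : ℝ) : ℂ) * τ = τ / 2 := by
    push_cast
    ring
  rw [e1, e2, e3]
  simp [n0]

theorem Theta_eq {τ : ℂ} (hτ : 0 < τ.im) (z : Fin 8 → ℂ) :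
    Theta τ z = (thetaProd τ z 0 + thetaProd τ z (1 / 2)) / 2 + nome (2 * τ) * nome (-∑ i, z i) *
        ((thetaProd τ z (-(τ / 2)) + thetaProd τ z (-(τ / 2) + 1 / 2)) / 2) :=
  (hasSum_theta hτ z).tsum_eq

/-- The lattice vector `(2 n, 0, …, 0)`. -/
def axisVec (n : ℤ) : Fin 8 → ℝ := fun i => if i = 0 then 2 * n else 0

theorem add_axisVec_mem {x : Fin 8 → ℝ} (hx : x ∈ E8Lattice) (n : ℤ) :
    x + axisVec n ∈ E8Lattice := by
  obtain ⟨h, m, hm⟩ := hx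
  refine ⟨?_, m + n, ?_⟩
  · rcases h with h | h
    · refine Or.inl fun i => ?_
      obtain ⟨k, hk⟩ := h i
      refine ⟨if i = 0 then k + 2 * n else k, ?_⟩
      rw [Pi.add_apply, hk, axisVec]
      split_ifs <;> push_cast <;> ring
    · refine Or.inr fun i => ?_
      obtain ⟨k, hk⟩ := h i
      refine ⟨if i = 0 then k + 2 * n else k, ?_⟩
      rw [Pi.add_apply, hk, axisVec]
      split_ifs <;> push_cast <;> ring
  · simp only [Pi.add_apply, Finset.sum_add_distrib, hm, axisVec]
    simp
    ring

/-- Translation of the lattice by `(2 n, 0, …, 0)`. -/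
def axisEquiv (n : ℤ) : E8Lattice ≃ E8Lattice where
  toFun w := ⟨w.1 + axisVec n, add_axisVec_mem w.2 n⟩
  invFun w := ⟨w.1 + axisVec (-n), add_axisVec_mem w.2 (-n)⟩
  left_inv w := by
    ext i
    simp [axisVec]
    split_ifs <;> ring
  right_inv w := by
    ext i
    simp [axisVec]
    split_ifs <;> ring

/-- The vector `z + (2 s, 0, …, 0)`. -/
def axisShift (s : ℂ) (z : Fin 8 → ℂ) : Fin 8 → ℂ := fun i => z i + if i = 0 then 2 * s else 0

theorem Theta_axisShift_int (τ : ℂ) (z : Fin 8 → ℂ) (k : ℤ) :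
    Theta τ (axisShift k z) = Theta τ z := by
  refine tsum_congr fun w => ?_
  obtain ⟨h, -⟩ := w.2
  have h2 : ∃ n : ℤ, (2 * w.1 0 : ℂ) = n := by
    rcases h with h | h
    · obtain ⟨n, hn⟩ := h 0
      exact ⟨2 * n, by rw [hn]; push_cast; ring⟩
    · obtain ⟨n, hn⟩ := h 0
      exact ⟨2 * n + 1, by rw [hn]; push_cast; ring⟩
  obtain ⟨n, hn⟩ := h2
  have e : dotC (axisShift k z) (cv w.1) = dotC z (cv w.1) + k * (2 * w.1 0) := by
    simp [dotC, axisShift, cv, Fin.sum_univ_eight]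
    ring
  rw [e, hn, mul_add, ← add_assoc, Complex.exp_add]
  have e2 : cexp (2 * πC * I * (k * n)) = 1 := by
    rw [Complex.exp_eq_one_iff]
    exact ⟨k * n, by rw [πC]; push_cast; ring⟩
  rw [e2, mul_one]

theorem Theta_axisShift (τ : ℂ) (z : Fin 8 → ℂ) (n : ℤ) :
    Theta τ (axisShift (n * τ) z) = nome (-(4 * n ^ 2 * τ + 4 * n * z 0)) * Theta τ z := by
  rw [Theta, Theta, ← (axisEquiv (-n)).tsum_eq, ← tsum_mul_left]
  refine tsum_congr fun w => ?_
  rw [nome, ← Complex.exp_add]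
  congr 1
  simp [dotC, axisShift, cv, axisEquiv, axisVec, Fin.sum_univ_eight, πC]
  ring

/-- Gaussian integers `(a - b) + (c - d) i` whose halves are the coordinates `exp (π i z_j)` of the
base point, given as `(a, b, c, d, a² + b² + c² + d²)`. -/
def baseData : ℕ → ℕ × ℕ × ℕ × ℕ × ℕ
  | 0 => (1, 0, 4, 0, 17)
  | 1 => (0, 3, 0, 2, 13)
  | 2 => (0, 0, 0, 1, 1)
  | 3 => (0, 4, 2, 0, 20)
  | 4 => (0, 2, 4, 0, 20)
  | 5 => (0, 2, 3, 0, 13)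
  | 6 => (4, 0, 1, 0, 17)
  | _ => (0, 4, 0, 2, 20)

/-- The Gaussian integer `(a - b) + (c - d) i`. -/
def gauss (p : ℕ × ℕ × ℕ × ℕ × ℕ) : ℂ := (p.1 - p.2.1 : ℂ) + (p.2.2.1 - p.2.2.2.1 : ℂ) * I

/-- The coordinates `exp (π i z_j)` of the base point. -/
def baseY (j : ℕ) : ℂ := gauss (baseData j) / 2

theorem baseY_inv (j : ℕ) (hj : j < 8) : (baseY j)⁻¹ = (2 : ℕ) / ((baseData j).2.2.2.2 : ℕ) *
    ((((baseData j).1 : ℂ) - (baseData j).2.1) + ((baseData j).2.2.2.1 - (baseData j).2.2.1 : ℂ) * I)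
    ∧ baseY j ≠ 0 := by
  have key : ∀ w : ℂ, baseY j * w = 1 → (baseY j)⁻¹ = w ∧ baseY j ≠ 0 := fun w h =>
    ⟨inv_eq_of_mul_eq_one_right h, left_ne_zero_of_mul_eq_one h⟩
  apply key
  interval_cases j <;> simp only [baseY, gauss, baseData] <;> push_cast <;>
    ring_nf <;> simp only [I_sq] <;> norm_num

/-- The base point in `ℂ ^ 8`. -/
def basePt : Fin 8 → ℂ := fun j => Complex.log (baseY j) / (Real.pi * I)

theorem nome_basePt (j : Fin 8) : nome (basePt j) = baseY j := by
  rw [nome, basePt, mul_div_cancel₀ _ (mul_ne_zero (by exact_mod_cast Real.pi_ne_zero) I_ne_zero)]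
  exact Complex.exp_log (baseY_inv j j.2).2

/-- The base point in the upper half-plane. -/
def baseTau : ℂ := ((60 * -Real.log (61 / 64) / Real.pi : ℝ) : ℂ) * I

theorem baseTau_im_pos : 0 < baseTau.im := by
  have h : Real.log (61 / 64) < 0 := Real.log_neg (by norm_num) (by norm_num)
  simp only [baseTau, Complex.im_ofReal_mul, I_im, mul_one]
  have := Real.pi_pos
  apply div_pos _ this
  linarith

theorem nome_baseTau : nome (baseTau / 60) = (61 : ℕ) / (64 : ℕ) := by
  have h : (Real.pi : ℂ) ≠ 0 := by exact_mod_cast Real.pi_ne_zero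
  have e : Real.pi * I * (baseTau / 60) = ((Real.log (61 / 64) : ℝ) : ℂ) := by
    rw [baseTau]
    push_cast
    field_simp
    rw [I_sq]
    ring
  rw [nome, e, ← Complex.ofReal_exp, Real.exp_log (by norm_num)]
  norm_num

namespace Disc

theorem Mem.widen {z w : ℂ} {x : Disc} (hw : Mem w x) (e : ℕ)
    (h : ‖z - w‖ * 18446744073709551616 ≤ e) :
    Mem z ⟨x.ok, x.a, x.b, x.c, x.d, Nat.add x.err e⟩ := by
  intro hx
  have h1 := hw hx
  have e1 : z * 18446744073709551616 - (⟨x.ok, x.a, x.b, x.c, x.d, Nat.add x.err e⟩ : Disc).centre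
      = (z - w) * 18446744073709551616 + (w * 18446744073709551616 - x.centre) := by
    simp only [centre]
    ring
  have e2 : ((Nat.add x.err e : ℕ) : ℝ) = x.err + e := by simp
  rw [e1, e2]
  refine (norm_add_le _ _).trans ?_
  rw [norm_mul]
  have h4 : ‖(18446744073709551616 : ℂ)‖ = 18446744073709551616 := by simp
  rw [h4]
  linarith

/-- A disc containing `π i`. -/
def piI : Disc := ⟨true, 0, 0, 57952155664616982739, 0, 2⟩

theorem mem_piI : Mem (Real.pi * I) piI := by
  intro _
  have h1 := Real.pi_gt_d20
  have h2 := Real.pi_lt_d20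
  have e : (Real.pi : ℂ) * I * 18446744073709551616 - piI.centre
      = ((Real.pi * 18446744073709551616 - 57952155664616982739 : ℝ) : ℂ) * I := by
    simp [piI, centre]
    ring
  rw [e, norm_mul, norm_I, mul_one, Complex.norm_real, Real.norm_eq_abs, abs_le]
  simp only [piI]
  constructor
  · norm_num at h1 h2 ⊢
    linarith
  · norm_num at h1 h2 ⊢
    linarith

/-- The partial sum of the exponential series. -/
def expSum : ℕ → Disc → Disc
  | 0, _ => ofNat 0
  | k + 1, x => add (expSum k x) (mul (pow x k) (ofFrac 1 k.factorial))

theorem mem_expSum {z : ℂ} {x : Disc} (h : Mem z x) (k : ℕ) :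
    Mem (∑ m ∈ range k, z ^ m / m.factorial) (expSum k x) := by
  induction k with
  | zero => simpa [expSum] using mem_ofNat 0
  | succ k ih =>
    rw [Finset.sum_range_succ]
    refine ih.add ?_
    have := (h.pow k).mul (mem_ofFrac 1 k.factorial)
    rwa [Nat.cast_one, mul_one_div] at this

/-- A disc containing `exp (π i / 60)`. -/
def zeta : Disc := ⟨true, 18421463452065262317, 0, 965427990666446556, 0, 64⟩

theorem sub_zeta : (fun x : Disc => sub ⟨x.ok, x.a, x.b, x.c, x.d, Nat.add x.err 1⟩ zeta)
    (expSum 12 (mul piI (ofFrac 1 60))) = true := by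
  decide +kernel

theorem mem_zeta : Mem (E8Jacobi.nome (1 / 60)) zeta := by
  set x : ℂ := Real.pi * I * ((1 : ℕ) / (60 : ℕ)) with hx
  have hm : Mem x (mul piI (ofFrac 1 60)) := mem_piI.mul (mem_ofFrac 1 60)
  refine ((mem_expSum hm 12).widen (z := E8Jacobi.nome (1 / 60)) 1 ?_).of_sub sub_zeta
  have e : E8Jacobi.nome (1 / 60) = cexp x := by
    rw [E8Jacobi.nome, hx]
    norm_num
  have hn : ‖x‖ ≤ 1 / 19 := by
    rw [hx]
    simp
    rw [abs_of_pos Real.pi_pos]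
    linarith [Real.pi_lt_d4]
  rw [e]
  have hb := Complex.exp_bound (x := x) (hn.trans (by norm_num)) (n := 12) (by norm_num)
  have h12 : ‖x‖ ^ 12 ≤ (1 / 19) ^ 12 := pow_le_pow_left₀ (norm_nonneg _) hn 12
  norm_num [Nat.factorial] at hb h12 ⊢
  nlinarith [norm_nonneg x]

/-- A disc containing `exp (π i (c τ + B) / N)` at the base point. -/
def nome (c N B : ℕ) : Disc :=
  mul (pow (ofFrac 61 64) (Nat.div (Nat.mul 60 c) N)) (pow zeta (Nat.div (Nat.mul 60 B) N))

theorem mem_nome (c N B : ℕ) (hN : N ∣ 60) :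
    Mem (E8Jacobi.nome ((c * baseTau + B) / N)) (nome c N B) := by
  obtain ⟨d, hd⟩ := hN
  have hN0 : 0 < N := Nat.pos_of_ne_zero (by rintro rfl; simp at hd)
  have e1 : Nat.div (Nat.mul 60 c) N = d * c := by
    rw [nat_div_eq, Nat.mul_eq, hd, mul_assoc, Nat.mul_div_cancel_left _ hN0]
  have e2 : Nat.div (Nat.mul 60 B) N = d * B := by
    rw [nat_div_eq, Nat.mul_eq, hd, mul_assoc, Nat.mul_div_cancel_left _ hN0]
  have h60 : (60 : ℂ) = N * d := by exact_mod_cast hd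
  have hNC : (N : ℂ) ≠ 0 := by exact_mod_cast hN0.ne'
  have hdC : (d : ℂ) ≠ 0 := fun h => by simp [h] at h60
  have e : (c * baseTau + B) / N = ((d * c : ℕ) : ℂ) * (baseTau / 60) + ((d * B : ℕ) : ℂ) * (1 / 60) := by
    rw [h60]
    push_cast
    field_simp
  rw [e, nome_add, nome_nat_mul, nome_nat_mul, nome_baseTau, nome, e1, e2]
  exact ((mem_ofFrac 61 64).pow _).mul (mem_zeta.pow _)

/-- A disc containing `exp (π i z_j)` at the base point. -/
def baseY (j : ℕ) : Disc :=
  mul (ofFrac 1 2)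
    ((fun p : ℕ × ℕ × ℕ × ℕ × ℕ => add (add (ofNat p.1) (neg (ofNat p.2.1)))
      ⟨true, 0, 0, Nat.mul p.2.2.1 18446744073709551616,
        Nat.mul p.2.2.2.1 18446744073709551616, 0⟩) (baseData j))

/-- A disc containing `exp (-π i z_j)` at the base point. -/
def baseV (j : ℕ) : Disc :=
  (fun p : ℕ × ℕ × ℕ × ℕ × ℕ => mul (ofFrac 2 p.2.2.2.2)
    (add (add (ofNat p.1) (neg (ofNat p.2.1)))
      ⟨true, 0, 0, Nat.mul p.2.2.2.1 18446744073709551616,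
        Nat.mul p.2.2.1 18446744073709551616, 0⟩)) (baseData j)

theorem mem_imag (m n : ℕ) : Mem ((m - n : ℂ) * I)
    ⟨true, 0, 0, Nat.mul m 18446744073709551616, Nat.mul n 18446744073709551616, 0⟩ := by
  intro _
  have : ((m - n : ℂ) * I) * 18446744073709551616 - (⟨true, 0, 0, Nat.mul m 18446744073709551616,
      Nat.mul n 18446744073709551616, 0⟩ : Disc).centre = 0 := by
    simp [centre]
    ring
  rw [this]
  simp

theorem mem_baseY (j : ℕ) : Mem (E8Jacobi.baseY j) (baseY j) := by
  have h : E8Jacobi.baseY j = ((1 : ℕ) / (2 : ℕ)) * ((((baseData j).1 : ℂ) + -((baseData j).2.1))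
      + ((baseData j).2.2.1 - (baseData j).2.2.2.1 : ℂ) * I) := by
    rw [E8Jacobi.baseY, gauss]
    push_cast
    ring
  rw [h]
  exact (mem_ofFrac 1 2).mul (((mem_ofNat _).add (mem_ofNat _).neg).add (mem_imag _ _))

theorem mem_baseV (j : ℕ) (hj : j < 8) : Mem (E8Jacobi.baseY j)⁻¹ (baseV j) := by
  rw [(baseY_inv j hj).1, sub_eq_add_neg ((baseData j).1 : ℂ)]
  exact (mem_ofFrac 2 _).mul (((mem_ofNat _).add (mem_ofNat _).neg).add (mem_imag _ _))

/-- The product of the first `n` members of a sequence of first components, with the `k`-th one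
replaced by the second component. -/
def prodRow : ℕ → (ℕ → Disc × Disc) → ℕ → Disc
  | 0, _, _ => ofNat 1
  | n + 1, f, k => mul (prodRow n f k) (bif Nat.beq k (n + 1) then (f n).2 else (f n).1)

/-- The discs for the value and the derivative of a factor `e * θ(x + s)`, where `e` is `1` if
`half` is `false` and `exp (-π i x)` otherwise. -/
def factor (half : Bool) (c : ℕ) (e : Disc) (t : Disc × Disc) : Disc × Disc :=
  bif half then (mul e t.1, mul (ofNat c) (mul e (add (mul (ofNat 2) t.2) (neg t.1))))
  else (t.1, mul (ofNat c) (mul (ofNat 2) t.2))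

/-- The `j`-th factor of one of the four products that make up the theta function. -/
def thetaFactor (half odd : Bool) (c : ℕ) (q p : Disc) (j : ℕ) : Disc × Disc :=
  factor half c (pow (baseV j) c)
    ((fun u v : Disc => bif odd then theta 8 p (neg u) (neg v) else theta 8 p u v)
      (bif half then pow (baseY j) (Nat.mul 2 c) else mul q (pow (baseY j) (Nat.mul 2 c)))
      (bif half then mul p (pow (baseV j) (Nat.mul 2 c))
        else mul q (pow (baseV j) (Nat.mul 2 c))))

/-- Discs for the value (`k = 0`) and the partial derivatives (`1 ≤ k ≤ 8`) of the theta function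
`Θ ((c τ + B) / N, c z)` at the base point. -/
def thetaRow (c N B : ℕ) (k : ℕ) : Disc :=
  (fun q p : Disc =>
    mul (ofFrac 1 2) (add
      (add (prodRow 8 (thetaFactor false false c q p) k)
        (prodRow 8 (thetaFactor false true c q p) k))
      (mul p (add (prodRow 8 (thetaFactor true false c q p) k)
        (prodRow 8 (thetaFactor true true c q p) k)))))
    (nome c N B) (mul (nome c N B) (nome c N B))

end Disc

/-- The shift in the argument of the theta factors. -/
def factorShift (half odd : Bool) (τ : ℂ) : ℂ :=
  (bif half then -(τ / 2) else 0) + (bif odd then 1 / 2 else 0)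

/-- A factor of the products that make up the theta function of the lattice. -/
def thetaFactor (half odd : Bool) (τ x : ℂ) : ℂ :=
  (bif half then nome (-x) else 1) * jacobiTheta₂ (x + factorShift half odd τ) τ

/-- The derivative of a theta factor, divided by `π i`. -/
def thetaFactor' (half odd : Bool) (τ x : ℂ) : ℂ :=
  bif half then nome (-x) * (2 * (jacobiTheta₂' (x + factorShift half odd τ) τ / (2 * Real.pi * I))
    + -jacobiTheta₂ (x + factorShift half odd τ) τ)
  else 2 * (jacobiTheta₂' (x + factorShift half odd τ) τ / (2 * Real.pi * I))

theorem Theta_eq_factors {τ : ℂ} (hτ : 0 < τ.im) (z : Fin 8 → ℂ) :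
    Theta τ z = (1 : ℕ) / (2 : ℕ) *
      ((∏ i, thetaFactor false false τ (z i) + ∏ i, thetaFactor false true τ (z i))
        + nome τ * nome τ *
          (∏ i, thetaFactor true false τ (z i) + ∏ i, thetaFactor true true τ (z i))) := by
  have e : nome (-∑ i, z i) = ∏ i, nome (-z i) := by
    simp only [nome]
    rw [← Complex.exp_sum]
    congr 1
    simp [Finset.mul_sum]
  rw [Theta_eq hτ, e, two_mul, nome_add]
  simp only [thetaFactor, factorShift, thetaProd, cond_true, cond_false, Finset.prod_mul_distrib,
    add_zero, zero_add, one_mul]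
  push_cast
  ring

theorem hasDerivAt_nome (x : ℂ) : HasDerivAt nome (Real.pi * I * nome x) x := by
  have h := ((hasDerivAt_id x).const_mul ((Real.pi : ℂ) * I)).cexp
  refine HasDerivAt.congr_deriv (f := nome) h ?_
  simp only [nome, id_eq]
  ring

theorem hasStrictDerivAt_of_hasDerivAt {f f' : ℂ → ℂ} (h : ∀ x, HasDerivAt f (f' x) x) (x : ℂ) :
    HasStrictDerivAt f (f' x) x := by
  have hd : Differentiable ℂ f := fun y => (h y).differentiableAt
  have := (hd.analyticAt x).hasStrictDerivAt
  rwa [(h x).deriv] at this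

theorem hasStrictDerivAt_thetaFactor (half odd : Bool) {τ : ℂ} (hτ : 0 < τ.im) (x : ℂ) :
    HasStrictDerivAt (thetaFactor half odd τ) (Real.pi * I * thetaFactor' half odd τ x) x := by
  refine hasStrictDerivAt_of_hasDerivAt (f' := fun x => Real.pi * I * thetaFactor' half odd τ x)
    (fun y => ?_) x
  have h1 : HasDerivAt (fun x => jacobiTheta₂ (x + factorShift half odd τ) τ)
      (jacobiTheta₂' (y + factorShift half odd τ) τ) y :=
    (hasDerivAt_jacobiTheta₂_fst (y + factorShift half odd τ) hτ).comp_add_const y _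
  have hpi : (2 * Real.pi * I : ℂ) ≠ 0 := Complex.two_pi_I_ne_zero
  have hpi' : (Real.pi : ℂ) ≠ 0 := by exact_mod_cast Real.pi_ne_zero
  cases half with
  | false =>
    have e : Real.pi * I * thetaFactor' false odd τ y
        = jacobiTheta₂' (y + factorShift false odd τ) τ := by
      simp only [thetaFactor', cond_false]
      field_simp
    have e2 : thetaFactor false odd τ = fun x => jacobiTheta₂ (x + factorShift false odd τ) τ := by
      funext x
      simp [thetaFactor]
    rw [e, e2]
    exact h1
  | true =>
    have h2 : HasDerivAt (fun x => nome (-x)) (-(Real.pi * I * nome (-y))) y := by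
      have h := (hasDerivAt_nome (-y)).comp y (hasDerivAt_neg y)
      rw [mul_neg_one] at h
      exact h
    have h3 := h2.mul h1
    have e : Real.pi * I * thetaFactor' true odd τ y
        = -(Real.pi * I * nome (-y)) * jacobiTheta₂ (y + factorShift true odd τ) τ
          + nome (-y) * jacobiTheta₂' (y + factorShift true odd τ) τ := by
      simp only [thetaFactor', cond_true]
      field_simp
      ring
    rw [e]
    exact h3

theorem continuousAt_factorShift (half odd : Bool) (τ : ℂ) :
    ContinuousAt (factorShift half odd) τ := by
  have : Continuous fun τ => factorShift half odd τ := by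
    cases half <;> cases odd <;> simp only [factorShift, cond_true, cond_false] <;> fun_prop
  exact this.continuousAt

theorem continuousAt_thetaFactor (half odd : Bool) {τ : ℂ} (hτ : 0 < τ.im) (x : ℂ) :
    ContinuousAt (fun τ => thetaFactor half odd τ x) τ := by
  have h : ContinuousAt (fun τ => jacobiTheta₂ (x + factorShift half odd τ) τ) τ :=
    (continuousAt_jacobiTheta₂ (x + factorShift half odd τ) hτ).comp
      (f := fun τ => (x + factorShift half odd τ, τ))
      ((continuousAt_const.add (continuousAt_factorShift half odd τ)).prodMk continuousAt_id)
  exact continuousAt_const.mul h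

theorem continuousAt_thetaFactor' (half odd : Bool) {τ : ℂ} (hτ : 0 < τ.im) (x : ℂ) :
    ContinuousAt (fun τ => thetaFactor' half odd τ x) τ := by
  have h : ContinuousAt (fun τ => jacobiTheta₂ (x + factorShift half odd τ) τ) τ :=
    (continuousAt_jacobiTheta₂ (x + factorShift half odd τ) hτ).comp
      (f := fun τ => (x + factorShift half odd τ, τ))
      ((continuousAt_const.add (continuousAt_factorShift half odd τ)).prodMk continuousAt_id)
  have h' : ContinuousAt (fun τ => jacobiTheta₂' (x + factorShift half odd τ) τ) τ :=
    (continuousAt_jacobiTheta₂' (x + factorShift half odd τ) hτ).comp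
      (f := fun τ => (x + factorShift half odd τ, τ))
      ((continuousAt_const.add (continuousAt_factorShift half odd τ)).prodMk continuousAt_id)
  cases half with
  | false => exact continuousAt_const.mul (h'.div_const _)
  | true => exact continuousAt_const.mul ((continuousAt_const.mul (h'.div_const _)).add h.neg)

/-- The product of `f j` (`k = 0`), or its derivative in the direction `k - 1` (`1 ≤ k`). -/
def prodRow {n : ℕ} (f g : Fin n → ℂ) (k : ℕ) : ℂ := ∏ j : Fin n, if k = j + 1 then g j else f j

theorem Disc.mem_prodRow {n : ℕ} {f g : Fin n → ℂ} {F : ℕ → Disc × Disc}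
    (h : ∀ j : Fin n, Disc.Mem (f j) (F j).1 ∧ Disc.Mem (g j) (F j).2) (k : ℕ) :
    Disc.Mem (E8Jacobi.prodRow f g k) (Disc.prodRow n F k) := by
  induction n with
  | zero => simpa [E8Jacobi.prodRow, Disc.prodRow] using mem_one
  | succ n ih =>
    rw [E8Jacobi.prodRow, Fin.prod_univ_castSucc]
    refine (ih (f := fun j => f j.castSucc) (g := fun j => g j.castSucc)
      fun j => h j.castSucc).mul ?_
    have h1 := h (Fin.last n)
    rw [Fin.val_last] at h1 ⊢
    by_cases hk : k = n + 1
    · rw [if_pos hk, hk, (Nat.beq_refl (n + 1) : Nat.beq (n + 1) (n + 1) = true)]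
      exact h1.2
    · rw [if_neg hk, (Bool.eq_false_iff.2 fun he => hk (Nat.eq_of_beq_eq_true he) :
        Nat.beq k (n + 1) = false)]
      exact h1.1

theorem hasStrictFDerivAt_prodRow {n : ℕ} (f g : Fin n → ℂ → ℂ) (c : ℂ) (z : Fin n → ℂ)
    (h : ∀ j, HasStrictDerivAt (f j) (Real.pi * I * g j (c * z j)) (c * z j)) :
    HasStrictFDerivAt (fun z : Fin n → ℂ => ∏ j, f j (c * z j))
      (∑ i : Fin n, (Real.pi * I * prodRow (fun j => f j (c * z j))
        (fun j => c * g j (c * z j)) (i + 1)) • ContinuousLinearMap.proj (R := ℂ)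
          (φ := fun _ : Fin n => ℂ) i) z := by
  have h1 : ∀ j ∈ (Finset.univ : Finset (Fin n)), HasStrictFDerivAt
      (fun z : Fin n → ℂ => f j (c * z j))
      ((Real.pi * I * g j (c * z j)) • (c • ContinuousLinearMap.proj (R := ℂ)
        (φ := fun _ : Fin n => ℂ) j)) z := by
    intro j _
    have hp : HasStrictFDerivAt (fun z : Fin n → ℂ => c * z j)
        (c • ContinuousLinearMap.proj (R := ℂ) (φ := fun _ : Fin n => ℂ) j) z :=
      (ContinuousLinearMap.proj (R := ℂ) (φ := fun _ : Fin n => ℂ) j).hasStrictFDerivAt.const_mul c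
    exact (h j).comp_hasStrictFDerivAt (f := fun z : Fin n → ℂ => c * z j) z hp
  refine (HasStrictFDerivAt.finsetProd h1).congr_fderiv ?_
  refine Finset.sum_congr rfl fun i _ => ?_
  rw [smul_smul, smul_smul]
  congr 1
  rw [prodRow, ← Finset.mul_prod_erase _ _ (Finset.mem_univ i), if_pos rfl]
  have e : ∏ x ∈ Finset.univ.erase i, (if (i : ℕ) + 1 = x + 1 then c * g x (c * z x)
      else f x (c * z x)) = ∏ x ∈ Finset.univ.erase i, f x (c * z x) := by
    refine Finset.prod_congr rfl fun j hj => if_neg fun he => ?_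
    exact (Finset.ne_of_mem_erase hj) (Fin.ext (by omega))
  rw [e]
  ring

theorem continuousAt_prodRow {n : ℕ} {f g : Fin n → ℂ → ℂ} {τ : ℂ}
    (hf : ∀ j, ContinuousAt (f j) τ) (hg : ∀ j, ContinuousAt (g j) τ) (k : ℕ) :
    ContinuousAt (fun τ => prodRow (fun j => f j τ) (fun j => g j τ) k) τ := by
  refine tendsto_finsetProd _ fun j _ => ?_
  split_ifs
  · exact hg j
  · exact hf j

theorem nome_one : nome 1 = -1 := by
  rw [nome, mul_one, Complex.exp_pi_mul_I]

theorem nome_zero : nome 0 = 1 := by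
  rw [nome, mul_zero, Complex.exp_zero]

theorem nome_two_mul_int (n : ℤ) : nome (2 * n) = 1 := by
  rw [nome, Complex.exp_eq_one_iff]
  exact ⟨n, by ring⟩

theorem nome_nat_mul_basePt (c : ℕ) (j : Fin 8) : nome (2 * (c * basePt j)) = baseY j ^ (2 * c) := by
  rw [← nome_basePt, ← nome_nat_mul]
  push_cast
  ring_nf

theorem nome_neg_nat_mul_basePt (c : ℕ) (j : Fin 8) :
    nome (-(2 * (c * basePt j))) = (baseY j)⁻¹ ^ (2 * c) := by
  rw [nome_neg, nome_nat_mul_basePt, inv_pow]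

theorem Disc.mem_thetaFactor (half odd : Bool) {τ : ℂ} (hτ : 0 < τ.im) (c : ℕ) {q p : Disc}
    (hq : Disc.Mem (E8Jacobi.nome τ) q) (hp : Disc.Mem (E8Jacobi.nome τ * E8Jacobi.nome τ) p)
    (j : Fin 8) :
    Disc.Mem (E8Jacobi.thetaFactor half odd τ (c * basePt j))
        (Disc.thetaFactor half odd c q p j).1 ∧
      Disc.Mem (c * E8Jacobi.thetaFactor' half odd τ (c * basePt j))
        (Disc.thetaFactor half odd c q p j).2 := by
  have hp' : Disc.Mem (E8Jacobi.nome τ ^ 2) p := by rwa [sq]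
  have hY := (Disc.mem_baseY j).pow (2 * c)
  have hV := (Disc.mem_baseV j j.2).pow (2 * c)
  have he : Disc.Mem (E8Jacobi.nome (-(c * basePt j))) (Disc.pow (Disc.baseV j) c) := by
    have := (Disc.mem_baseV j j.2).pow c
    rwa [← nome_basePt, ← nome_neg, ← nome_nat_mul, mul_neg] at this
  rw [← nome_nat_mul_basePt] at hY
  rw [← nome_neg_nat_mul_basePt] at hV
  have hτ0 := nome_ne_zero τ
  cases half with
  | false =>
    cases odd with
    | false =>
      have ht := Disc.mem_theta hτ (c * basePt j + factorShift false false τ) 8 hp'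
        (U := Disc.mul q ((Disc.baseY j).pow (Nat.mul 2 c)))
        (V := Disc.mul q ((Disc.baseV j).pow (Nat.mul 2 c)))
        (by simpa [factorShift] using hq.mul hY) (by simpa [factorShift] using hq.mul hV)
      refine ⟨?_, ?_⟩
      · rw [E8Jacobi.thetaFactor, cond_false, one_mul]
        exact ht.1
      · exact (Disc.mem_ofNat c).mul ((Disc.mem_ofNat 2).mul ht.2)
    | true =>
      have e1 : E8Jacobi.nome τ * E8Jacobi.nome (2 * (c * basePt j + factorShift false true τ))
          = -(E8Jacobi.nome τ * E8Jacobi.nome (2 * (c * basePt j))) := by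
        have : 2 * (c * basePt j + factorShift false true τ) = 2 * (c * basePt j) + 1 := by
          simp only [factorShift, cond_false, cond_true]
          ring
        rw [this, nome_add, nome_one]
        ring
      have e2 : E8Jacobi.nome τ * E8Jacobi.nome (-(2 * (c * basePt j + factorShift false true τ)))
          = -(E8Jacobi.nome τ * E8Jacobi.nome (-(2 * (c * basePt j)))) := by
        have : -(2 * (c * basePt j + factorShift false true τ)) = -(2 * (c * basePt j)) + -1 := by
          simp only [factorShift, cond_false, cond_true]
          ring
        rw [this, nome_add, nome_neg 1, nome_one]
        norm_num
      have ht := Disc.mem_theta hτ (c * basePt j + factorShift false true τ) 8 hp'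
        (U := (Disc.mul q ((Disc.baseY j).pow (Nat.mul 2 c))).neg)
        (V := (Disc.mul q ((Disc.baseV j).pow (Nat.mul 2 c))).neg)
        (e1 ▸ (hq.mul hY).neg) (e2 ▸ (hq.mul hV).neg)
      refine ⟨?_, ?_⟩
      · rw [E8Jacobi.thetaFactor, cond_false, one_mul]
        exact ht.1
      · exact (Disc.mem_ofNat c).mul ((Disc.mem_ofNat 2).mul ht.2)
  | true =>
    cases odd with
    | false =>
      have e1 : E8Jacobi.nome τ * E8Jacobi.nome (2 * (c * basePt j + factorShift true false τ))
          = E8Jacobi.nome (2 * (c * basePt j)) := by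
        rw [← nome_add]
        congr 1
        simp only [factorShift, cond_false, cond_true]
        ring
      have e2 : E8Jacobi.nome τ * E8Jacobi.nome (-(2 * (c * basePt j + factorShift true false τ)))
          = E8Jacobi.nome τ * E8Jacobi.nome τ * E8Jacobi.nome (-(2 * (c * basePt j))) := by
        rw [← nome_add, ← nome_add, ← nome_add]
        congr 1
        simp only [factorShift, cond_false, cond_true]
        ring
      have ht := Disc.mem_theta hτ (c * basePt j + factorShift true false τ) 8 hp'
        (U := (Disc.baseY j).pow (Nat.mul 2 c))
        (V := Disc.mul p ((Disc.baseV j).pow (Nat.mul 2 c)))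
        (e1 ▸ hY) (e2 ▸ hp.mul hV)
      exact ⟨he.mul ht.1, (Disc.mem_ofNat c).mul
        (he.mul (((Disc.mem_ofNat 2).mul ht.2).add ht.1.neg))⟩
    | true =>
      have e1 : E8Jacobi.nome τ * E8Jacobi.nome (2 * (c * basePt j + factorShift true true τ))
          = -E8Jacobi.nome (2 * (c * basePt j)) := by
        rw [← nome_add, ← mul_neg_one, ← nome_one, ← nome_add]
        congr 1
        simp only [factorShift, cond_true]
        ring
      have e2 : E8Jacobi.nome τ * E8Jacobi.nome (-(2 * (c * basePt j + factorShift true true τ)))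
          = -(E8Jacobi.nome τ * E8Jacobi.nome τ * E8Jacobi.nome (-(2 * (c * basePt j)))) := by
        have h1 : E8Jacobi.nome (-1) = -1 := by
          rw [nome_neg, nome_one]
          norm_num
        rw [← nome_add, ← nome_add, ← nome_add, ← mul_neg_one (E8Jacobi.nome (_ + _)), ← h1,
          ← nome_add]
        congr 1
        simp only [factorShift, cond_true]
        ring
      have ht := Disc.mem_theta hτ (c * basePt j + factorShift true true τ) 8 hp'
        (U := ((Disc.baseY j).pow (Nat.mul 2 c)).neg)
        (V := (Disc.mul p ((Disc.baseV j).pow (Nat.mul 2 c))).neg)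
        (e1 ▸ hY.neg) (e2 ▸ (hp.mul hV).neg)
      exact ⟨he.mul ht.1, (Disc.mem_ofNat c).mul
        (he.mul (((Disc.mem_ofNat 2).mul ht.2).add ht.1.neg))⟩

/-- The linear form on `ℂ ^ 8` with the coefficients `π i v_1, …, π i v_8`. -/
def jetMap (v : ℕ → ℂ) : (Fin 8 → ℂ) →L[ℂ] ℂ :=
  ∑ i : Fin 8, (Real.pi * I * v (i + 1)) • ContinuousLinearMap.proj (R := ℂ) (φ := fun _ : Fin 8 => ℂ) i

theorem jetMap_apply (v : ℕ → ℂ) (z : Fin 8 → ℂ) :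
    jetMap v z = ∑ i : Fin 8, Real.pi * I * v (i + 1) * z i := by
  simp [jetMap]

theorem jetMap_add (v w : ℕ → ℂ) : jetMap (fun k => v k + w k) = jetMap v + jetMap w := by
  ext z
  simp only [jetMap_apply, add_apply, ← Finset.sum_add_distrib]
  exact Finset.sum_congr rfl fun i _ => by ring

theorem jetMap_smul (c : ℂ) (v : ℕ → ℂ) : jetMap (fun k => c * v k) = c • jetMap v := by
  ext z
  simp only [jetMap_apply, smul_apply, smul_eq_mul, Finset.mul_sum]
  exact Finset.sum_congr rfl fun i _ => by ring

/-- A function with the quasi-periodicity of a Jacobi form of index `m`, together with discs `r`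
containing its value and its partial derivatives at the base point. -/
structure JForm (m : ℕ) (φ : ℂ → (Fin 8 → ℂ) → ℂ) (r : ℕ → Disc) : Prop where
  shift : ∀ τ : ℂ, 0 < τ.im → ∀ (z : Fin 8 → ℂ) (n : ℤ),
    φ τ (axisShift (n * τ) z) = nome (-(4 * n ^ 2 * τ + 4 * n * z 0)) ^ m * φ τ z
  jet : ∃ g : ℕ → ℂ → ℂ, (∀ τ : ℂ, 0 < τ.im → φ τ basePt = g 0 τ) ∧
    (∀ τ : ℂ, 0 < τ.im → HasStrictFDerivAt (φ τ) (jetMap fun k => g k τ) basePt) ∧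
    (∀ k, ContinuousAt (g k) baseTau) ∧ ∀ k, Disc.Mem (g k baseTau) (r k)

/-- A coefficient function that is continuous at the base point with value in the disc `C`. -/
def HasCoef (c : ℂ → ℂ) (C : Disc) : Prop := ContinuousAt c baseTau ∧ Disc.Mem (c baseTau) C

theorem JForm.add {m : ℕ} {φ ψ : ℂ → (Fin 8 → ℂ) → ℂ} {r s : ℕ → Disc} (hφ : JForm m φ r)
    (hψ : JForm m ψ s) : JForm m (fun τ z => φ τ z + ψ τ z) (fun k => (r k).add (s k)) where
  shift τ hτ z n := by rw [hφ.shift τ hτ, hψ.shift τ hτ, mul_add]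
  jet := by
    obtain ⟨g, g1, g2, g3, g4⟩ := hφ.jet
    obtain ⟨h, h1, h2, h3, h4⟩ := hψ.jet
    refine ⟨fun k τ => g k τ + h k τ, fun τ hτ => by rw [g1 τ hτ, h1 τ hτ], fun τ hτ => ?_,
      fun k => (g3 k).add (h3 k), fun k => (g4 k).add (h4 k)⟩
    rw [jetMap_add]
    exact (g2 τ hτ).add (h2 τ hτ)

theorem JForm.mul {m : ℕ} {φ : ℂ → (Fin 8 → ℂ) → ℂ} {r : ℕ → Disc} {c : ℂ → ℂ} {C : Disc}
    (hc : HasCoef c C) (hφ : JForm m φ r) :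
    JForm m (fun τ z => c τ * φ τ z) (fun k => C.mul (r k)) where
  shift τ hτ z n := by rw [hφ.shift τ hτ, mul_left_comm]
  jet := by
    obtain ⟨g, g1, g2, g3, g4⟩ := hφ.jet
    refine ⟨fun k τ => c τ * g k τ, fun τ hτ => by rw [g1 τ hτ], fun τ hτ => ?_,
      fun k => hc.1.mul (g3 k), fun k => hc.2.mul (g4 k)⟩
    rw [jetMap_smul]
    exact (g2 τ hτ).const_mul (c τ)

theorem JForm.congr {m : ℕ} {φ ψ : ℂ → (Fin 8 → ℂ) → ℂ} {r : ℕ → Disc} (hφ : JForm m φ r)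
    (h : ∀ τ z, ψ τ z = φ τ z) : JForm m ψ r := by
  have : ψ = φ := funext fun τ => funext fun z => h τ z
  exact this ▸ hφ

theorem im_affine_pos (c N B : ℕ) (hc : 0 < c) (hN : 0 < N) {τ : ℂ} (hτ : 0 < τ.im) :
    0 < ((c * τ + B) / N : ℂ).im := by
  have : ((c * τ + B) / N : ℂ).im = c * τ.im / N := by simp
  rw [this]
  positivity

/-- The value and the partial derivatives of `Θ (τ, c z)` at the base point. -/
def thetaJet (c : ℕ) (k : ℕ) (τ : ℂ) : ℂ :=
  (1 : ℕ) / (2 : ℕ) *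
    ((prodRow (fun j : Fin 8 => thetaFactor false false τ (c * basePt j))
        (fun j => c * thetaFactor' false false τ (c * basePt j)) k
      + prodRow (fun j : Fin 8 => thetaFactor false true τ (c * basePt j))
        (fun j => c * thetaFactor' false true τ (c * basePt j)) k)
      + nome τ * nome τ * (prodRow (fun j : Fin 8 => thetaFactor true false τ (c * basePt j))
        (fun j => c * thetaFactor' true false τ (c * basePt j)) k
      + prodRow (fun j : Fin 8 => thetaFactor true true τ (c * basePt j))
        (fun j => c * thetaFactor' true true τ (c * basePt j)) k))

theorem Theta_nat_mul_basePt (c : ℕ) {τ : ℂ} (hτ : 0 < τ.im) :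
    Theta τ (fun i => c * basePt i) = thetaJet c 0 τ := by
  rw [Theta_eq_factors hτ]
  simp [thetaJet, prodRow]

theorem hasStrictFDerivAt_Theta (c : ℕ) {τ : ℂ} (hτ : 0 < τ.im) :
    HasStrictFDerivAt (fun z : Fin 8 → ℂ => Theta τ (fun i => c * z i))
      (jetMap fun k => thetaJet c k τ) basePt := by
  have h : ∀ half odd : Bool, HasStrictFDerivAt
      (fun z : Fin 8 → ℂ => ∏ j, thetaFactor half odd τ (c * z j))
      (jetMap fun k => prodRow (fun j : Fin 8 => thetaFactor half odd τ (c * basePt j))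
        (fun j => c * thetaFactor' half odd τ (c * basePt j)) k) basePt := fun half odd =>
    hasStrictFDerivAt_prodRow (fun _ => thetaFactor half odd τ) (fun _ => thetaFactor' half odd τ)
      c basePt fun j => hasStrictDerivAt_thetaFactor half odd hτ _
  have e : (fun z : Fin 8 → ℂ => Theta τ (fun i => c * z i)) = fun z => (1 : ℕ) / (2 : ℕ) *
      ((∏ i, thetaFactor false false τ (c * z i) + ∏ i, thetaFactor false true τ (c * z i))
        + nome τ * nome τ *
          (∏ i, thetaFactor true false τ (c * z i) + ∏ i, thetaFactor true true τ (c * z i))) :=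
    funext fun z => Theta_eq_factors hτ _
  rw [e]
  simp only [thetaJet]
  rw [jetMap_smul, jetMap_add, jetMap_add, jetMap_smul, jetMap_add]
  exact ((((h false false).add (h false true)).add
    (((h true false).add (h true true)).const_mul _))).const_mul _

theorem continuousAt_thetaJet (c k : ℕ) {τ : ℂ} (hτ : 0 < τ.im) :
    ContinuousAt (thetaJet c k) τ := by
  have h : ∀ half odd : Bool, ContinuousAt
      (fun τ => prodRow (fun j : Fin 8 => thetaFactor half odd τ (c * basePt j))
        (fun j => c * thetaFactor' half odd τ (c * basePt j)) k) τ := fun half odd =>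
    continuousAt_prodRow (fun j => continuousAt_thetaFactor half odd hτ _)
      (fun j => continuousAt_const.mul (continuousAt_thetaFactor' half odd hτ _)) k
  have hn : ContinuousAt nome τ := (hasDerivAt_nome τ).continuousAt
  exact continuousAt_const.mul (((h false false).add (h false true)).add
    ((hn.mul hn).mul ((h true false).add (h true true))))

theorem mem_thetaJet (c N B k : ℕ) (hc : 0 < c) (hN : N ∣ 60) :
    Disc.Mem (thetaJet c k ((c * baseTau + B) / N)) (Disc.thetaRow c N B k) := by
  have hN0 : 0 < N := Nat.pos_of_dvd_of_pos hN (by norm_num)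
  have hτ := im_affine_pos c N B hc hN0 baseTau_im_pos
  have hq := Disc.mem_nome c N B hN
  have h := fun half odd => Disc.mem_prodRow
    (fun j => Disc.mem_thetaFactor half odd hτ c hq (hq.mul hq) j) k
  exact (Disc.mem_ofFrac 1 2).mul (((h false false).add (h false true)).add
    ((hq.mul hq).mul ((h true false).add (h true true))))

theorem jForm_Theta (c N B : ℕ) (hc : 0 < c) (hN : N ∣ 60) :
    JForm (c * N) (fun τ z => Theta ((c * τ + B) / N) (fun i => c * z i)) (Disc.thetaRow c N B) where
  shift τ hτ z n := by
    have hN0 : (N : ℂ) ≠ 0 := by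
      exact_mod_cast (Nat.pos_of_dvd_of_pos hN (by norm_num)).ne'
    have e : (fun i => (c : ℂ) * axisShift (n * τ) z i) = axisShift ((n * N : ℤ) * ((c * τ + B) / N))
        (axisShift ((-(n * B) : ℤ) : ℂ) fun i => c * z i) := by
      funext i
      simp only [axisShift]
      by_cases hi : i = 0
      · simp only [hi, if_true]
        push_cast
        field_simp
        ring
      · simp [hi]
    rw [e, Theta_axisShift, Theta_axisShift_int, ← nome_nat_mul]
    congr 1
    have e2 : -(4 * ((n * N : ℤ) : ℂ) ^ 2 * ((c * τ + B) / N) + 4 * ((n * N : ℤ) : ℂ) *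
        axisShift ((-(n * B) : ℤ) : ℂ) (fun i => c * z i) 0)
        = ((c * N : ℕ) : ℂ) * -(4 * n ^ 2 * τ + 4 * n * z 0)
          + 2 * ((2 * (n ^ 2 * N * B) : ℤ) : ℂ) := by
      simp only [axisShift, if_true]
      push_cast
      field_simp
      ring
    rw [e2, nome_add, nome_two_mul_int, mul_one]
  jet := by
    have hN0 : 0 < N := Nat.pos_of_dvd_of_pos hN (by norm_num)
    refine ⟨fun k τ => thetaJet c k ((c * τ + B) / N), fun τ hτ => ?_, fun τ hτ => ?_, fun k => ?_,
      fun k => mem_thetaJet c N B k hc hN⟩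
    · exact Theta_nat_mul_basePt c (im_affine_pos c N B hc hN0 hτ)
    · exact hasStrictFDerivAt_Theta c (im_affine_pos c N B hc hN0 hτ)
    · exact ContinuousAt.comp (f := fun τ : ℂ => (c * τ + B) / N)
        (continuousAt_thetaJet c k (im_affine_pos c N B hc hN0 baseTau_im_pos))
        (Continuous.continuousAt (by fun_prop))

theorem HasCoef.ofFrac (m n : ℕ) : HasCoef (fun _ => (m : ℂ) / n) (Disc.ofFrac m n) :=
  ⟨continuousAt_const, Disc.mem_ofFrac m n⟩

theorem HasCoef.add {c d : ℂ → ℂ} {C D : Disc} (hc : HasCoef c C) (hd : HasCoef d D) :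
    HasCoef (fun τ => c τ + d τ) (C.add D) :=
  ⟨hc.1.add hd.1, hc.2.add hd.2⟩

theorem HasCoef.mul {c d : ℂ → ℂ} {C D : Disc} (hc : HasCoef c C) (hd : HasCoef d D) :
    HasCoef (fun τ => c τ * d τ) (C.mul D) :=
  ⟨hc.1.mul hd.1, hc.2.mul hd.2⟩

theorem HasCoef.neg {c : ℂ → ℂ} {C : Disc} (hc : HasCoef c C) :
    HasCoef (fun τ => -c τ) C.neg :=
  ⟨hc.1.neg, hc.2.neg⟩

theorem HasCoef.pow {c : ℂ → ℂ} {C : Disc} (hc : HasCoef c C) (n : ℕ) :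
    HasCoef (fun τ => c τ ^ n) (C.pow n) :=
  ⟨hc.1.pow n, hc.2.pow n⟩

namespace Disc

/-- A disc containing `θ₃(0, τ)`, where `q` contains the nome of `τ`. -/
def theta3 (q : Disc) : Disc := (theta 8 (mul q q) q q).1

/-- A disc containing `θ₄(0, τ)`, where `q` contains the nome of `τ`. -/
def theta4 (q : Disc) : Disc := (theta 8 (mul q q) (neg q) (neg q)).1

/-- A disc containing `exp (-π i τ / 4) θ₂(0, τ)`, where `q` contains the nome of `τ`. -/
def theta2 (q : Disc) : Disc := (theta 8 (mul q q) (ofNat 1) (mul q q)).1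

/-- A disc containing `h₀ ((c τ + B) / N)` at the base point. -/
def h0 (c N B : ℕ) : Disc :=
  (fun q q' : Disc => add (mul (theta3 q) (theta3 q')) (mul q (mul (theta2 q) (theta2 q'))))
    (nome (Nat.mul 2 c) N (Nat.mul 2 B)) (nome (Nat.mul 6 c) N (Nat.mul 6 B))

/-- The sum of the first `n` members of a sequence. -/
def sum : ℕ → (ℕ → Disc) → Disc
  | 0, _ => ofNat 0
  | n + 1, f => add (sum n f) (f n)

end Disc

theorem th3_zero_eq (τ : ℂ) : th3 0 τ = jacobiTheta₂ 0 τ := by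
  refine tsum_congr fun n => ?_
  rw [jacobiTheta₂_term, ← Complex.exp_add]
  congr 1
  simp only [πC]
  ring

theorem th4_zero_eq (τ : ℂ) : th4 0 τ = jacobiTheta₂ (1 / 2) τ := by
  refine tsum_congr fun n => ?_
  rw [jacobiTheta₂_term, ← Complex.exp_pi_mul_I, ← Complex.exp_int_mul, ← Complex.exp_add,
    ← Complex.exp_add]
  congr 1
  simp only [πC]
  ring

theorem th2_zero_eq (τ : ℂ) : th2 0 τ = nome (τ / 4) * jacobiTheta₂ (-(τ / 2)) τ := by
  rw [th2, jacobiTheta₂, ← tsum_mul_left]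
  refine tsum_congr fun n => ?_
  rw [jacobiTheta₂_term, nome, ← Complex.exp_add, ← Complex.exp_add]
  congr 1
  simp only [πC]
  ring

theorem th2_zero_pow_four (τ : ℂ) : th2 0 τ ^ 4 = nome τ * jacobiTheta₂ (-(τ / 2)) τ ^ 4 := by
  rw [th2_zero_eq, mul_pow, ← nome_nat_mul]
  congr 2
  push_cast
  ring

theorem h0_eq (τ : ℂ) : h0 τ = jacobiTheta₂ 0 (2 * τ) * jacobiTheta₂ 0 (6 * τ)
    + nome (2 * τ) * (jacobiTheta₂ (-(2 * τ / 2)) (2 * τ) * jacobiTheta₂ (-(6 * τ / 2)) (6 * τ)) := by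
  have e : nome (2 * τ) = nome (2 * τ / 4) * nome (6 * τ / 4) := by
    rw [← nome_add]
    ring_nf
  rw [h0, th3_zero_eq, th3_zero_eq, th2_zero_eq, th2_zero_eq, e]
  ring

theorem continuousAt_affine (c N B : ℕ) (τ : ℂ) :
    ContinuousAt (fun τ : ℂ => (c * τ + B) / N) τ := Continuous.continuousAt (by fun_prop)

theorem hasCoef_nome (c N B : ℕ) (hN : N ∣ 60) :
    HasCoef (fun τ => nome ((c * τ + B) / N)) (Disc.nome c N B) :=
  ⟨(hasDerivAt_nome _).continuousAt.comp (f := fun τ : ℂ => (c * τ + B) / N)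
    (continuousAt_affine c N B _), Disc.mem_nome c N B hN⟩

theorem hasCoef_theta3 (c N B : ℕ) (hc : 0 < c) (hN : N ∣ 60) :
    HasCoef (fun τ => jacobiTheta₂ 0 ((c * τ + B) / N)) (Disc.theta3 (Disc.nome c N B)) := by
  have hτ := im_affine_pos c N B hc (Nat.pos_of_dvd_of_pos hN (by norm_num)) baseTau_im_pos
  have hq := Disc.mem_nome c N B hN
  refine ⟨(continuousAt_jacobiTheta₂ 0 hτ).comp (f := fun τ : ℂ => (0, (c * τ + B) / N))
    (continuousAt_const.prodMk (continuousAt_affine c N B _)), ?_⟩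
  refine (Disc.mem_theta hτ 0 8 (P := Disc.mul _ _) ?_ ?_ ?_).1
  · rw [sq]
    exact hq.mul hq
  · simpa [nome_zero] using hq
  · simpa [nome_zero] using hq

theorem hasCoef_theta4 (c N B : ℕ) (hc : 0 < c) (hN : N ∣ 60) :
    HasCoef (fun τ => jacobiTheta₂ (1 / 2) ((c * τ + B) / N)) (Disc.theta4 (Disc.nome c N B)) := by
  have hτ := im_affine_pos c N B hc (Nat.pos_of_dvd_of_pos hN (by norm_num)) baseTau_im_pos
  have hq := Disc.mem_nome c N B hN
  refine ⟨(continuousAt_jacobiTheta₂ (1 / 2) hτ).comp (f := fun τ : ℂ => (1 / 2, (c * τ + B) / N))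
    (continuousAt_const.prodMk (continuousAt_affine c N B _)), ?_⟩
  refine (Disc.mem_theta hτ (1 / 2) 8 (P := Disc.mul _ _) ?_ ?_ ?_).1
  · rw [sq]
    exact hq.mul hq
  · simpa [nome_one] using hq.neg
  · simpa [nome_neg, nome_one] using hq.neg

theorem hasCoef_theta2 (c N B : ℕ) (hc : 0 < c) (hN : N ∣ 60) :
    HasCoef (fun τ => jacobiTheta₂ (-((c * τ + B) / N / 2)) ((c * τ + B) / N))
      (Disc.theta2 (Disc.nome c N B)) := by
  have hτ := im_affine_pos c N B hc (Nat.pos_of_dvd_of_pos hN (by norm_num)) baseTau_im_pos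
  have hq := Disc.mem_nome c N B hN
  refine ⟨(continuousAt_jacobiTheta₂ _ hτ).comp
    (f := fun τ : ℂ => (-((c * τ + B) / N / 2), (c * τ + B) / N))
    (((continuousAt_affine c N B _).div_const 2).neg.prodMk (continuousAt_affine c N B _)), ?_⟩
  refine (Disc.mem_theta hτ _ 8 (P := Disc.mul _ _) ?_ ?_ ?_).1
  · rw [sq]
    exact hq.mul hq
  · rw [← nome_add, show ((c * baseTau + B) / N : ℂ) + 2 * -((c * baseTau + B) / N / 2) = 0 by ring,
      nome_zero]
    exact Disc.mem_one
  · rw [show (-(2 * -((c * baseTau + B) / N / 2)) : ℂ) = (c * baseTau + B) / N by ring]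
    exact hq.mul hq

theorem hasCoef_h0 (c N B : ℕ) (hc : 0 < c) (hN : N ∣ 60) :
    HasCoef (fun τ => h0 ((c * τ + B) / N)) (Disc.h0 c N B) := by
  have h := ((hasCoef_theta3 (2 * c) N (2 * B) (by omega) hN).mul
      (hasCoef_theta3 (6 * c) N (6 * B) (by omega) hN)).add
    ((hasCoef_nome (2 * c) N (2 * B) hN).mul ((hasCoef_theta2 (2 * c) N (2 * B) (by omega) hN).mul
      (hasCoef_theta2 (6 * c) N (6 * B) (by omega) hN)))
  have e : (fun τ => h0 ((c * τ + B) / N)) = fun τ : ℂ =>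
      jacobiTheta₂ 0 (((2 * c : ℕ) * τ + (2 * B : ℕ)) / N) *
        jacobiTheta₂ 0 (((6 * c : ℕ) * τ + (6 * B : ℕ)) / N)
      + nome (((2 * c : ℕ) * τ + (2 * B : ℕ)) / N) *
        (jacobiTheta₂ (-(((2 * c : ℕ) * τ + (2 * B : ℕ)) / N / 2))
            (((2 * c : ℕ) * τ + (2 * B : ℕ)) / N) *
          jacobiTheta₂ (-(((6 * c : ℕ) * τ + (6 * B : ℕ)) / N / 2))
            (((6 * c : ℕ) * τ + (6 * B : ℕ)) / N)) := by
    funext τ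
    have e2 : ((2 * c : ℕ) * τ + (2 * B : ℕ)) / N = 2 * ((c * τ + B) / N) := by
      push_cast
      ring
    have e6 : ((6 * c : ℕ) * τ + (6 * B : ℕ)) / N = 6 * ((c * τ + B) / N) := by
      push_cast
      ring
    rw [e2, e6, h0_eq]
  rw [e]
  exact h

theorem JForm.sum {m : ℕ} {φ : ℕ → ℂ → (Fin 8 → ℂ) → ℂ} {r : ℕ → ℕ → Disc} (n : ℕ)
    (h : ∀ j, JForm m (φ j) (r j)) :
    JForm m (fun τ z => ∑ j ∈ range n, φ j τ z) (fun k => Disc.sum n fun j => r j k) := by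
  induction n with
  | zero =>
    refine ⟨fun τ _ z n => by simp, fun _ _ => 0, fun τ _ => by simp, fun τ _ => ?_,
      fun _ => continuousAt_const, fun _ => by simpa [Disc.sum] using Disc.mem_ofNat 0⟩
    have e : (jetMap fun _ => 0) = 0 := by
      ext z
      simp [jetMap_apply]
    rw [e]
    simpa using hasStrictFDerivAt_const (0 : ℂ) basePt
  | succ n ih => exact (ih.add (h n)).congr fun τ z => Finset.sum_range_succ _ _

namespace Disc

/-- Discs for the jet of `A_m`. -/
def rowAM (m k : ℕ) : Disc :=
  mul (ofFrac (Nat.pow m 3) (Nat.add (Nat.pow m 3) 1)) (add (thetaRow m 1 0 k)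
    (mul (ofFrac 1 (Nat.pow m 4)) (sum m fun j => thetaRow 1 m j k)))

/-- A disc for `θ₂(0, τ) ^ 4`, where `q` contains the nome of `τ`. -/
def theta2p (q : Disc) : Disc := mul q (pow (theta2 q) 4)

/-- Discs for the jet of `B_2`. -/
def rowB2 (k : ℕ) : Disc :=
  (fun t2 t3 t4 : Disc => mul (ofFrac 32 5) (add (add
    (mul (mul (ofFrac 1 12) (add t3 t4)) (thetaRow 2 1 0 k))
    (mul (mul (ofFrac 1 192) (neg (add t2 t3))) (thetaRow 1 2 0 k)))
    (mul (mul (ofFrac 1 192) (add t2 (neg t4))) (thetaRow 1 2 1 k))))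
    (theta2p (nome 1 1 0)) (pow (theta3 (nome 1 1 0)) 4) (pow (theta4 (nome 1 1 0)) 4)

/-- Discs for the jet of `B_3`. -/
def rowB3 (k : ℕ) : Disc :=
  mul (ofFrac 81 80) (add (mul (pow (h0 1 1 0) 2) (thetaRow 3 1 0 k))
    (mul (neg (ofFrac 1 243)) (sum 3 fun j => mul (pow (h0 1 3 j) 2) (thetaRow 1 3 j k))))

/-- Discs for the jet of `B_4`. -/
def rowB4 (k : ℕ) : Disc :=
  mul (ofFrac 16 15) (add
    (mul (pow (theta4 (nome 2 1 0)) 4)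
      (add (thetaRow 4 1 0 k) (mul (neg (ofFrac 1 16)) (thetaRow 2 2 1 k))))
    (mul (neg (ofFrac 1 1024)) (sum 4 fun j => mul (theta2p (nome 1 2 j)) (thetaRow 1 4 j k))))

/-- Discs for the jet of `B_6`. -/
def rowB6 (k : ℕ) : Disc :=
  mul (ofFrac 9 10) (add (add (mul (pow (h0 1 1 0) 2) (thetaRow 6 1 0 k))
    (mul (ofFrac 1 16) (sum 2 fun j => mul (pow (h0 1 1 j) 2) (thetaRow 3 2 (Nat.mul 3 j) k))))
    (add
    (mul (neg (ofFrac 1 243))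
      (sum 3 fun j => mul (pow (h0 1 3 j) 2) (thetaRow 2 3 (Nat.mul 2 j) k)))
    (mul (neg (ofFrac 1 3888)) (sum 6 fun j => mul (pow (h0 1 3 j) 2) (thetaRow 1 6 j k)))))

end Disc

theorem jForm_A1 : JForm 1 A1 (Disc.thetaRow 1 1 0) :=
  (jForm_Theta 1 1 0 (by norm_num) (by norm_num)).congr fun τ z => by simp [A1]

theorem jForm_A4 : JForm 4 A4 (Disc.thetaRow 2 2 0) :=
  (jForm_Theta 2 2 0 (by norm_num) (by norm_num)).congr fun τ z => by simp [A4]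

theorem jForm_AM (m : ℕ) (hm : 0 < m) (h : m ∣ 60) : JForm m (AM m) (Disc.rowAM m) := by
  have h1 := jForm_Theta m 1 0 hm (by norm_num)
  rw [mul_one] at h1
  have h2 := fun j => jForm_Theta 1 m j (by norm_num) h
  simp only [one_mul] at h2
  refine (JForm.mul (HasCoef.ofFrac (m ^ 3) (m ^ 3 + 1))
    (h1.add (JForm.mul (HasCoef.ofFrac 1 (m ^ 4)) (JForm.sum m h2)))).congr fun τ z => ?_
  simp [AM]

theorem hasCoef_theta2p (c N B : ℕ) (hc : 0 < c) (hN : N ∣ 60) :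
    HasCoef (fun τ => th2 0 ((c * τ + B) / N) ^ 4) (Disc.theta2p (Disc.nome c N B)) := by
  simp only [th2_zero_pow_four]
  exact (hasCoef_nome c N B hN).mul ((hasCoef_theta2 c N B hc hN).pow 4)

theorem jForm_B2 : JForm 2 B2 Disc.rowB2 := by
  have t2 := hasCoef_theta2p 1 1 0 (by norm_num) (by norm_num)
  have t3 := (hasCoef_theta3 1 1 0 (by norm_num) (by norm_num)).pow 4
  have t4 := (hasCoef_theta4 1 1 0 (by norm_num) (by norm_num)).pow 4
  refine (JForm.mul (HasCoef.ofFrac 32 5) (((JForm.mul ((HasCoef.ofFrac 1 12).mul (t3.add t4))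
    (jForm_Theta 2 1 0 (by norm_num) (by norm_num))).add
    (JForm.mul ((HasCoef.ofFrac 1 192).mul (t2.add t3).neg)
    (jForm_Theta 1 2 0 (by norm_num) (by norm_num)))).add
    (JForm.mul ((HasCoef.ofFrac 1 192).mul (t2.add t4.neg))
    (jForm_Theta 1 2 1 (by norm_num) (by norm_num))))).congr fun τ z => ?_
  simp only [B2, ee1, ee2, ee3, th3_zero_eq, th4_zero_eq, Nat.cast_one, Nat.cast_zero, one_mul,
    add_zero, div_one, Nat.cast_ofNat]
  ring

theorem jForm_B3 : JForm 3 B3 Disc.rowB3 := by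
  have h := fun j => JForm.mul ((hasCoef_h0 1 3 j (by norm_num) (by norm_num)).pow 2)
    (jForm_Theta 1 3 j (by norm_num) (by norm_num))
  refine (JForm.mul (HasCoef.ofFrac 81 80)
    ((JForm.mul ((hasCoef_h0 1 1 0 (by norm_num) (by norm_num)).pow 2)
      (jForm_Theta 3 1 0 (by norm_num) (by norm_num))).add
    (JForm.mul (HasCoef.ofFrac 1 243).neg (JForm.sum 3 h)))).congr fun τ z => ?_
  simp only [B3, Nat.cast_one, Nat.cast_zero, one_mul, add_zero, div_one, Nat.cast_ofNat]
  ring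

theorem jForm_B4 : JForm 4 B4 Disc.rowB4 := by
  have h := fun j => JForm.mul (hasCoef_theta2p 1 2 j (by norm_num) (by norm_num))
    (jForm_Theta 1 4 j (by norm_num) (by norm_num))
  refine (JForm.mul (HasCoef.ofFrac 16 15)
    ((JForm.mul ((hasCoef_theta4 2 1 0 (by norm_num) (by norm_num)).pow 4)
      ((jForm_Theta 4 1 0 (by norm_num) (by norm_num)).add (JForm.mul (HasCoef.ofFrac 1 16).neg
        (jForm_Theta 2 2 1 (by norm_num) (by norm_num))))).add
    (JForm.mul (HasCoef.ofFrac 1 1024).neg (JForm.sum 4 h)))).congr fun τ z => ?_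
  have e : (2 * τ + 1) / 2 = τ + 1 / 2 := by ring
  simp only [B4, th4_zero_eq, Nat.cast_one, Nat.cast_zero, one_mul, add_zero, div_one,
    Nat.cast_ofNat, e]
  ring

theorem jForm_B6 : JForm 6 B6 Disc.rowB6 := by
  have h2 := fun j => JForm.mul ((hasCoef_h0 1 1 j (by norm_num) (by norm_num)).pow 2)
    (jForm_Theta 3 2 (3 * j) (by norm_num) (by norm_num))
  have h3 := fun j => JForm.mul ((hasCoef_h0 1 3 j (by norm_num) (by norm_num)).pow 2)
    (jForm_Theta 2 3 (2 * j) (by norm_num) (by norm_num))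
  have h6 := fun j => JForm.mul ((hasCoef_h0 1 3 j (by norm_num) (by norm_num)).pow 2)
    (jForm_Theta 1 6 j (by norm_num) (by norm_num))
  refine (JForm.mul (HasCoef.ofFrac 9 10)
    (((JForm.mul ((hasCoef_h0 1 1 0 (by norm_num) (by norm_num)).pow 2)
      (jForm_Theta 6 1 0 (by norm_num) (by norm_num))).add
    (JForm.mul (HasCoef.ofFrac 1 16) (JForm.sum 2 h2))).add
    ((JForm.mul (HasCoef.ofFrac 1 243).neg (JForm.sum 3 h3)).add
    (JForm.mul (HasCoef.ofFrac 1 3888).neg (JForm.sum 6 h6))))).congr fun τ z => ?_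
  simp only [B6, Nat.cast_one, Nat.cast_zero, one_mul, add_zero, div_one, Nat.cast_ofNat,
    Nat.cast_mul]
  ring

/-- Rows of Gaussian integers `(a - b) + (c - d) i`, given as `(a, b, c, d)`, which form
approximately `2 ^ 20` times the inverse of the Jacobian matrix of the nine forms. -/
def inverseData : List (List (ℕ × ℕ × ℕ × ℕ)) :=
  [
    [(358442, 0, 40145, 0), (131222, 0, 19260, 0), (46780, 0, 7240, 0), (0, 122, 0, 18),
      (638, 0, 92, 0), (173169, 0, 29413, 0), (0, 41232, 0, 1357), (0, 3269, 0, 463),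
      (0, 11, 0, 2)],
    [(636878, 0, 10119, 0), (0, 15431, 162596, 0), (0, 66636, 62384, 0), (46, 0, 0, 1382),
      (0, 16537, 0, 4885), (546638, 0, 0, 62803), (0, 362429, 0, 71456), (0, 28903, 13211, 0),
      (0, 738, 0, 62)],
    [(1220137, 0, 597496, 0), (0, 385109, 0, 89486), (171881, 0, 0, 284905),
      (0, 1515, 0, 708), (0, 8520, 0, 23372), (420111, 0, 997594, 0), (0, 616349, 0, 232427),
      (17094, 0, 0, 59291), (0, 1399, 0, 438)],
    [(637564, 0, 0, 39376), (280373, 0, 268131, 0), (107903, 0, 76643, 0), (2736, 0, 0, 486),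
      (0, 14165, 0, 3527), (398763, 0, 0, 59593), (0, 506230, 0, 151039), (0, 30945, 21916, 0),
      (245, 0, 0, 1434)],
    [(352975, 0, 0, 129328), (0, 80813, 83363, 0), (7287, 0, 0, 70285), (1140, 0, 0, 1720),
      (0, 7090, 3625, 0), (408965, 0, 0, 79968), (0, 417235, 58042, 0), (0, 5983, 0, 1162),
      (448, 0, 0, 120)],
    [(615360, 0, 0, 613836), (0, 36161, 93949, 0), (41034, 0, 0, 43901), (3944, 0, 886, 0),
      (0, 13485, 7687, 0), (417670, 0, 0, 673755), (0, 477876, 502236, 0), (0, 1963, 0, 5063),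
      (639, 0, 0, 2159)],
    [(0, 360324, 1145162, 0), (0, 100271, 0, 157846), (17543, 0, 38818, 0), (0, 2136, 431, 0),
      (3775, 0, 0, 14538), (247725, 0, 992784, 0), (13487, 0, 0, 732749), (0, 22660, 6178, 0),
      (0, 1107, 1357, 0)],
    [(0, 696900, 0, 296471), (0, 340941, 254189, 0), (19580, 0, 232659, 0), (0, 2597, 442, 0),
      (13040, 0, 0, 7504), (0, 240169, 0, 259347), (386013, 0, 0, 110177),
      (50711, 0, 10601, 0), (0, 302, 0, 340)],
    [(0, 351679, 0, 733643), (611931, 0, 0, 2768), (0, 240448, 140648, 0), (2857, 0, 2527, 0),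
      (1729, 0, 33859, 0), (0, 490620, 0, 1002534), (277364, 0, 398245, 0),
      (0, 43991, 48936, 0), (1164, 0, 1046, 0)]]

namespace Disc

/-- The centre of a disc. -/
def value (x : Disc) : ℂ := x.centre / 18446744073709551616

theorem mem_value (x : Disc) : Mem x.value x := by
  intro _
  rw [value, div_mul_cancel₀ _ (by norm_num), sub_self, norm_zero]
  positivity

/-- The entries of the approximate inverse of the Jacobian matrix. -/
def inverse (k l : ℕ) : Disc :=
  (fun p : ℕ × ℕ × ℕ × ℕ => ⟨true, Nat.mul p.1 17592186044416, Nat.mul p.2.1 17592186044416,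
    Nat.mul p.2.2.1 17592186044416, Nat.mul p.2.2.2 17592186044416, 0⟩)
    ((inverseData.getD k []).getD l (0, 0, 0, 0))

/-- The row of the Jacobian matrix that belongs to a form of index `m` with the jet `r`. -/
def jacobianRow (m : ℕ) (r : ℕ → Disc) : ℕ → Disc
  | 0 => mul (ofNat m) (r 0)
  | k + 1 => r (k + 1)

/-- The disc of radius `1 / 20` around the entry of the unit matrix. -/
def unit (j l : ℕ) : Disc :=
  ⟨true, bif Nat.beq j l then 18446744073709551616 else 0, 0, 0, 0, 922337203685477580⟩

/-- The verification that the product of a row of the Jacobian matrix with the first `n` columns of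
its approximate inverse is close to a row of the unit matrix. -/
def check (m : ℕ) (r : ℕ → Disc) (j : ℕ) : ℕ → Bool
  | 0 => true
  | n + 1 => sub (sum 9 fun k => mul (jacobianRow m r k) (inverse k n)) (unit j n) && check m r j n

end Disc

theorem check_A1 : Disc.check 1 (Disc.thetaRow 1 1 0) 0 9 = true := by decide +kernel

theorem check_A2 : Disc.check 2 (Disc.rowAM 2) 1 9 = true := by decide +kernel

theorem check_A3 : Disc.check 3 (Disc.rowAM 3) 2 9 = true := by decide +kernel

theorem check_A4 : Disc.check 4 (Disc.thetaRow 2 2 0) 3 9 = true := by decide +kernel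

theorem check_A5 : Disc.check 5 (Disc.rowAM 5) 4 9 = true := by decide +kernel

theorem check_B2 : Disc.check 2 Disc.rowB2 5 9 = true := by decide +kernel

theorem check_B3 : Disc.check 3 Disc.rowB3 6 9 = true := by decide +kernel

theorem check_B4 : Disc.check 4 Disc.rowB4 7 9 = true := by decide +kernel

theorem check_B6 : Disc.check 6 Disc.rowB6 8 9 = true := by decide +kernel

open Filter Topology

/-- The indices of the nine forms. -/
def formIndex : Fin 9 → ℕ := ![1, 2, 3, 4, 5, 2, 3, 4, 6]

/-- Discs for the jets of the nine forms. -/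
def formDisc : Fin 9 → ℕ → Disc :=
  ![Disc.thetaRow 1 1 0, Disc.rowAM 2, Disc.rowAM 3, Disc.thetaRow 2 2 0, Disc.rowAM 5,
    Disc.rowB2, Disc.rowB3, Disc.rowB4, Disc.rowB6]

theorem jForm_nineForms : ∀ j, JForm (formIndex j) (nineForms j) (formDisc j) := by
  rw [Fin.forall_fin_succ, Fin.forall_fin_succ, Fin.forall_fin_succ, Fin.forall_fin_succ,
    Fin.forall_fin_succ, Fin.forall_fin_succ, Fin.forall_fin_succ, Fin.forall_fin_succ,
    Fin.forall_fin_one]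
  exact ⟨jForm_A1, jForm_AM 2 (by norm_num) (by norm_num), jForm_AM 3 (by norm_num) (by norm_num),
    jForm_A4, jForm_AM 5 (by norm_num) (by norm_num), jForm_B2, jForm_B3, jForm_B4, jForm_B6⟩

theorem check_nineForms : ∀ j : Fin 9, Disc.check (formIndex j) (formDisc j) j 9 = true := by
  rw [Fin.forall_fin_succ, Fin.forall_fin_succ, Fin.forall_fin_succ, Fin.forall_fin_succ,
    Fin.forall_fin_succ, Fin.forall_fin_succ, Fin.forall_fin_succ, Fin.forall_fin_succ,
    Fin.forall_fin_one]
  exact ⟨check_A1, check_A2, check_A3, check_A4, check_A5, check_B2, check_B3, check_B4, check_B6⟩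

theorem Disc.sub_of_check {m : ℕ} {r : ℕ → Disc} {j n : ℕ} (h : Disc.check m r j n = true) {l : ℕ}
    (hl : l < n) : Disc.sub (Disc.sum 9 fun k => Disc.mul (Disc.jacobianRow m r k)
      (Disc.inverse k l)) (Disc.unit j l) = true := by
  induction n with
  | zero => omega
  | succ n ih =>
    rw [Disc.check, Bool.and_eq_true] at h
    rcases Nat.lt_succ_iff_lt_or_eq.1 hl with h' | rfl
    · exact ih h.2 h'
    · exact h.1

theorem Disc.mem_sum {f : ℕ → ℂ} {F : ℕ → Disc} (h : ∀ k, Disc.Mem (f k) (F k)) (n : ℕ) :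
    Disc.Mem (∑ k ∈ range n, f k) (Disc.sum n F) := by
  induction n with
  | zero => simpa [Disc.sum] using Disc.mem_ofNat 0
  | succ n ih =>
    rw [Finset.sum_range_succ]
    exact ih.add (h n)

/-- The row of the Jacobian matrix of `t ^ m * φ z` at `t = 1`, where `φ` has the jet `v`. -/
def jacobianRow (m : ℕ) (v : ℕ → ℂ) (k : ℕ) : ℂ := if k = 0 then m * v 0 else v k

theorem Disc.mem_jacobianRow (m : ℕ) {v : ℕ → ℂ} {r : ℕ → Disc} (h : ∀ k, Disc.Mem (v k) (r k))
    (k : ℕ) : Disc.Mem (E8Jacobi.jacobianRow m v k) (Disc.jacobianRow m r k) := by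
  cases k with
  | zero => exact (Disc.mem_ofNat m).mul (h 0)
  | succ k => exact h (k + 1)

theorem Disc.norm_sub_le_of_mem_unit {z : ℂ} {j l : ℕ} (h : Disc.Mem z (Disc.unit j l)) :
    ‖z - if j = l then 1 else 0‖ ≤ 1 / 20 := by
  have h1 := h rfl
  have e : z * 18446744073709551616 - (Disc.unit j l).centre
      = (z - if j = l then 1 else 0) * 18446744073709551616 := by
    by_cases hjl : j = l
    · subst hjl
      rw [Disc.unit, (Nat.beq_refl j : Nat.beq j j = true)]
      simp [Disc.centre]
      ring
    · rw [Disc.unit, (Bool.eq_false_iff.2 fun he => hjl (Nat.eq_of_beq_eq_true he) :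
        Nat.beq j l = false)]
      simp [Disc.centre, hjl]
  rw [e, norm_mul] at h1
  simp only [Disc.unit] at h1
  norm_num at h1 ⊢
  linarith

theorem det_jacobian_ne_zero {v : Fin 9 → ℕ → ℂ} (h : ∀ j k, Disc.Mem (v j k) (formDisc j k)) :
    (Matrix.of fun j k : Fin 9 => jacobianRow (formIndex j) (v j) k).det ≠ 0 := by
  set A : Matrix (Fin 9) (Fin 9) ℂ := Matrix.of fun j k => jacobianRow (formIndex j) (v j) k
  set M : Matrix (Fin 9) (Fin 9) ℂ := Matrix.of fun k l => (Disc.inverse k l).value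
  have hAM : ∀ j l, ‖(A * M) j l - if j = l then 1 else 0‖ ≤ 1 / 20 := by
    intro j l
    have h1 := (Disc.mem_sum (fun k => (Disc.mem_jacobianRow (formIndex j) (h j) k).mul
      (Disc.inverse k l).mem_value) 9).of_sub (Disc.sub_of_check (check_nineForms j) l.2)
    have h2 := Disc.norm_sub_le_of_mem_unit h1
    rw [Finset.sum_range] at h2
    simpa [Matrix.mul_apply, A, M, Fin.ext_iff] using h2
  have hdet : (A * M).det ≠ 0 := by
    refine det_ne_zero_of_sum_row_lt_diag fun j => ?_
    have hd : 19 / 20 ≤ ‖(A * M) j j‖ := by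
      have h1 := hAM j j
      rw [if_pos rfl] at h1
      have h2 := norm_sub_norm_le 1 ((A * M) j j)
      rw [norm_sub_rev, norm_one] at h2
      linarith
    have ho : ∑ l ∈ Finset.univ.erase j, ‖(A * M) j l‖ ≤ ∑ _l ∈ Finset.univ.erase j, (1 / 20 : ℝ) := by
      refine Finset.sum_le_sum fun l hl => ?_
      have h1 := hAM j l
      rwa [if_neg (Finset.ne_of_mem_erase hl).symm, sub_zero] at h1
    rw [Finset.sum_const, Finset.card_erase_of_mem (Finset.mem_univ j)] at ho
    have h8 : (Finset.univ : Finset (Fin 9)).card - 1 = 8 := rfl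
    rw [h8] at ho
    have := ho.trans_lt (by norm_num : (8 • (1 / 20 : ℝ)) < 19 / 20)
    linarith
  rw [Matrix.det_mul] at hdet
  exact left_ne_zero_of_mul hdet

theorem continuousAt_det {n X : Type*} [Fintype n] [DecidableEq n] [TopologicalSpace X]
    {f : X → Matrix n n ℂ} {x : X} (h : ∀ i j, ContinuousAt (fun t => f t i j) x) :
    ContinuousAt (fun t => (f t).det) x :=
  ContinuousAt.comp (g := Matrix.det) (continuous_id.matrix_det).continuousAt
    (continuousAt_pi.2 fun i => continuousAt_pi.2 fun j => h i j)

theorem exists_jacobian : ∃ g : Fin 9 → ℕ → ℂ → ℂ,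
    (∀ j τ, 0 < τ.im → nineForms j τ basePt = g j 0 τ) ∧
    (∀ j τ, 0 < τ.im → HasStrictFDerivAt (nineForms j τ) (jetMap fun k => g j k τ) basePt) ∧
    ∀ᶠ τ in 𝓝 baseTau,
      (Matrix.of fun j k : Fin 9 => jacobianRow (formIndex j) (fun k => g j k τ) k).det ≠ 0 := by
  choose g g1 g2 g3 g4 using fun j => (jForm_nineForms j).jet
  refine ⟨g, g1, g2, ?_⟩
  have hc : ContinuousAt (fun τ => (Matrix.of fun j k : Fin 9 =>
      jacobianRow (formIndex j) (fun k => g j k τ) k).det) baseTau := by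
    refine continuousAt_det fun j k => ?_
    simp only [Matrix.of_apply, jacobianRow]
    split_ifs
    · exact continuousAt_const.mul (g3 j 0)
    · exact g3 j k
  exact hc.eventually_ne (det_jacobian_ne_zero g4)

theorem eq_zero_of_eventually_eval_eq_zero {n : ℕ} {G : MvPolynomial (Fin n) ℂ} {x : Fin n → ℂ}
    (h : ∀ᶠ y in 𝓝 x, MvPolynomial.eval y G = 0) : G = 0 := by
  obtain ⟨ε, hε, hb⟩ := Metric.eventually_nhds_iff_ball.1 h
  refine MvPolynomial.funext_set (s := fun i => Metric.ball (x i) ε) (fun i => ?_) fun y hy => ?_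
  · exact infinite_of_mem_nhds (x i) (Metric.ball_mem_nhds _ hε)
  · rw [map_zero]
    apply hb
    rw [ball_pi _ hε]
    exact hy

theorem eval_scale_eq_zero {n : ℕ} (G : MvPolynomial (Fin n) ℂ) (m : Fin n → ℕ) (f : Fin n → ℂ)
    (h : ∀ C : ℝ, ∃ t : ℂ, C < ‖t‖ ∧ MvPolynomial.eval (fun j => t ^ m j * f j) G = 0) (t : ℂ) :
    MvPolynomial.eval (fun j => t ^ m j * f j) G = 0 := by
  set H : Polynomial ℂ := MvPolynomial.aeval (fun j => Polynomial.X ^ m j * Polynomial.C (f j)) G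
  have hH : ∀ t, H.eval t = MvPolynomial.eval (fun j => t ^ m j * f j) G := by
    intro t
    have e : (Polynomial.aeval t).comp (MvPolynomial.aeval
        (fun j => Polynomial.X ^ m j * Polynomial.C (f j))) =
        MvPolynomial.aeval (R := ℂ) (fun j => t ^ m j * f j) := by
      ext j
      simp
      exact mul_comm _ _
    have e2 := DFunLike.congr_fun e G
    rw [AlgHom.comp_apply, MvPolynomial.aeval_eq_eval, Polynomial.coe_aeval_eq_eval] at e2
    exact e2
  have h0 : H = 0 := by
    refine Polynomial.eq_zero_of_infinite_isRoot H fun hfin => ?_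
    obtain ⟨C, hC⟩ := hfin.isBounded.exists_norm_le
    obtain ⟨t, ht, h0⟩ := h C
    exact absurd (hC t ((hH t).trans h0)) (not_le.2 ht)
  rw [← hH, h0, Polynomial.eval_zero]

theorem exists_lt_norm_nome {τ : ℂ} (hτ : 0 < τ.im) (w : ℂ) (C : ℝ) :
    ∃ n : ℤ, C < ‖nome (-(4 * n ^ 2 * τ + 4 * n * w))‖ := by
  obtain ⟨n, hn⟩ := exists_nat_gt ((|w.im| + |C|) / τ.im)
  rw [div_lt_iff₀ hτ] at hn
  refine ⟨n + 1, ?_⟩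
  have e : (-(4 * ((n + 1 : ℤ) : ℂ) ^ 2 * τ + 4 * ((n + 1 : ℤ) : ℂ) * w)).im
      = -(4 * (n + 1) * ((n + 1) * τ.im + w.im)) := by
    have e1 : (-(4 * ((n + 1 : ℤ) : ℂ) ^ 2 * τ + 4 * ((n + 1 : ℤ) : ℂ) * w))
        = ((-(4 * (n + 1) ^ 2) : ℝ) : ℂ) * τ + ((-(4 * (n + 1)) : ℝ) : ℂ) * w := by
      push_cast
      ring
    rw [e1, Complex.add_im, Complex.im_ofReal_mul, Complex.im_ofReal_mul]
    ring
  rw [norm_nome, e]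
  have h1 : |C| ≤ (n + 1) * τ.im + w.im := by
    have := neg_abs_le w.im
    nlinarith
  have h2 : |C| ≤ Real.pi * (4 * (n + 1) * ((n + 1) * τ.im + w.im)) := by
    have h3 := Real.pi_gt_three
    have h4 : 1 * |C| ≤ (Real.pi * (4 * (n + 1))) * ((n + 1) * τ.im + w.im) :=
      mul_le_mul (by nlinarith [Nat.cast_nonneg (α := ℝ) n]) h1 (abs_nonneg C) (by positivity)
    linarith
  have h5 := Real.add_one_le_exp (Real.pi * (4 * (n + 1) * ((n + 1) * τ.im + w.im)))
  have h6 := le_abs_self C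
  rw [show -Real.pi * -(4 * ((n : ℝ) + 1) * ((n + 1) * τ.im + w.im))
    = Real.pi * (4 * (n + 1) * ((n + 1) * τ.im + w.im)) by ring]
  linarith

theorem _root_.HasStrictFDerivAt.fst_pow_mul_snd {𝕜 E : Type*} [NontriviallyNormedField 𝕜]
    [NormedAddCommGroup E] [NormedSpace 𝕜 E] {f : E → 𝕜} {f' : E →L[𝕜] 𝕜} {x : E}
    (h : HasStrictFDerivAt f f' x) (m : ℕ) :
    HasStrictFDerivAt (fun p : 𝕜 × E => p.1 ^ m * f p.2)
      (f'.comp (ContinuousLinearMap.snd 𝕜 𝕜 E) +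
        f x • ((m : 𝕜) • ContinuousLinearMap.fst 𝕜 𝕜 E)) (1, x) := by
  have h1 : HasStrictFDerivAt (fun p : 𝕜 × E => p.1 ^ m)
      ((m : 𝕜) • ContinuousLinearMap.fst 𝕜 𝕜 E) (1, x) := by
    have := (hasStrictFDerivAt_fst (𝕜 := 𝕜) (p := ((1, x) : 𝕜 × E))).pow m
    simpa using this
  have h2 : HasStrictFDerivAt (fun p : 𝕜 × E => f p.2)
      (f'.comp (ContinuousLinearMap.snd 𝕜 𝕜 E)) (1, x) :=
    HasStrictFDerivAt.comp (f := Prod.snd) ((1, x) : 𝕜 × E) h hasStrictFDerivAt_snd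
  refine (h1.mul h2).congr_fderiv ?_
  simp

/-- The nine forms are algebraically independent for all `τ` near the base point. -/
theorem eventually_nineForms_independent : ∀ᶠ τ in 𝓝 baseTau, ∀ G : MvPolynomial (Fin 9) ℂ,
    (∀ z, MvPolynomial.eval (fun j => nineForms j τ z) G = 0) → G = 0 := by
  obtain ⟨g, g1, g2, g3⟩ := exists_jacobian
  filter_upwards [g3, (isOpen_lt continuous_const Complex.continuous_im).mem_nhds baseTau_im_pos]
    with τ hdet hτ G hG
  have hscale : ∀ t z, MvPolynomial.eval (fun j => t ^ formIndex j * nineForms j τ z) G = 0 := by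
    intro t z
    refine eval_scale_eq_zero G formIndex _ (fun C => ?_) t
    obtain ⟨n, hn⟩ := exists_lt_norm_nome hτ (z 0) C
    refine ⟨_, hn, ?_⟩
    have := hG (axisShift (n * τ) z)
    simpa only [(jForm_nineForms _).shift τ hτ] using this
  set F : ℂ × (Fin 8 → ℂ) → Fin 9 → ℂ := fun p j => p.1 ^ formIndex j * nineForms j τ p.2
  set L : Fin 9 → (ℂ × (Fin 8 → ℂ)) →L[ℂ] ℂ := fun j =>
    (jetMap fun k => g j k τ).comp (ContinuousLinearMap.snd ℂ ℂ (Fin 8 → ℂ)) +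
      (nineForms j τ basePt) • ((formIndex j : ℂ) • ContinuousLinearMap.fst ℂ ℂ (Fin 8 → ℂ))
  have hF : HasStrictFDerivAt F (ContinuousLinearMap.pi L) (1, basePt) := by
    refine hasStrictFDerivAt_pi.2 fun j => ?_
    exact (g2 j τ hτ).fst_pow_mul_snd (formIndex j)
  have hsurj : (ContinuousLinearMap.pi L).range = ⊤ := by
    refine LinearMap.range_eq_top.2 fun y => ?_
    set A := Matrix.of fun j k : Fin 9 => jacobianRow (formIndex j) (fun k => g j k τ) k with hA
    have hx : A.mulVec (A⁻¹.mulVec y) = y := by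
      rw [Matrix.mulVec_mulVec, Matrix.mul_nonsing_inv A (Ne.isUnit hdet), Matrix.one_mulVec]
    set x := A⁻¹.mulVec y
    refine ⟨(x 0, fun i => x i.succ / (Real.pi * I)), ?_⟩
    funext j
    have hpi : (Real.pi * I : ℂ) ≠ 0 := mul_ne_zero (by exact_mod_cast Real.pi_ne_zero) I_ne_zero
    have hj := congrFun hx j
    rw [Matrix.mulVec, dotProduct, Fin.sum_univ_succ] at hj
    simp only [hA, Matrix.of_apply, jacobianRow] at hj
    rw [← hj]
    simp only [L, g1 j τ hτ, ContinuousLinearMap.coe_coe, ContinuousLinearMap.pi_apply]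
    simp only [add_apply, smul_apply, ContinuousLinearMap.comp_apply, ContinuousLinearMap.coe_snd',
      ContinuousLinearMap.coe_fst', jetMap_apply, smul_eq_mul]
    rw [add_comm]
    congr 1
    · simp
      ring
    · refine Finset.sum_congr rfl fun i _ => ?_
      rw [if_neg (by simp), Fin.val_succ]
      field_simp
  refine eq_zero_of_eventually_eval_eq_zero (x := F (1, basePt)) ?_
  rw [← hF.map_nhds_eq_of_surj hsurj, Filter.eventually_map]
  exact Eventually.of_forall fun p => hscale p.1 p.2

open UpperHalfPlane ModularForm MatrixGroups in
theorem E4_eq (z : ℍ) : E4 z = E₄ z := by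
  have hq : ‖qExp z‖ < 1 := by
    simpa [qExp, πC] using UpperHalfPlane.norm_exp_two_pi_I_lt_one z
  have h := EisensteinSeries.q_expansion_bernoulli (by norm_num : 3 ≤ 4) ⟨2, rfl⟩ z
  rw [E4, tsum_pow_div_one_sub_eq_tsum_sigma hq, h, show bernoulli 4 = -1 / 30 by decide +kernel]
  simp only [zpow_natCast, qExp, πC]
  norm_num

open UpperHalfPlane ModularForm MatrixGroups in
theorem E6_eq (z : ℍ) : E6 z = E₆ z := by
  have hq : ‖qExp z‖ < 1 := by
    simpa [qExp, πC] using UpperHalfPlane.norm_exp_two_pi_I_lt_one z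
  have h := EisensteinSeries.q_expansion_bernoulli (by norm_num : 3 ≤ 6) ⟨3, rfl⟩ z
  rw [E6, tsum_pow_div_one_sub_eq_tsum_sigma hq, h, show bernoulli 6 = 1 / 42 by decide +kernel]
  simp only [zpow_natCast, qExp, πC]
  norm_num

open UpperHalfPlane ModularForm MatrixGroups in
theorem exists_modularForm_eq (d : ℤ) (z : ℍ) :
    ∃ w : ℍ, ∀ (k : ℤ) (f : ModularForm 𝒮ℒ k), f w = ((z : ℂ) + d) ^ k * f z := by
  set g : SL(2, ℤ) := ⟨!![0, -1; 1, d], by simp [Matrix.det_fin_two_of]⟩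
  refine ⟨Matrix.SpecialLinearGroup.mapGL ℝ g • z, fun k f => ?_⟩
  have hg : Matrix.SpecialLinearGroup.mapGL ℝ g ∈ 𝒮ℒ := ⟨g, rfl⟩
  rw [SlashInvariantForm.slash_action_eqn' f hg z]
  have h10 : (Matrix.SpecialLinearGroup.mapGL ℝ g) 1 0 = ((1 : ℤ) : ℝ) := rfl
  have h11 : (Matrix.SpecialLinearGroup.mapGL ℝ g) 1 1 = (d : ℝ) := rfl
  rw [h10, h11]
  simp

open UpperHalfPlane ModularForm MatrixGroups in
theorem tendsto_E_atImInfty {k : ℕ} (hk : 3 ≤ k) (hk2 : Even k) :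
    Tendsto (E hk) atImInfty (𝓝 1) := by
  have hanal := ModularFormClass.analyticAt_cuspFunction_zero (E hk) one_pos one_mem_strictPeriods_SL
  have hper := SlashInvariantFormClass.periodic_comp_ofComplex (E hk) (h := 1)
    one_mem_strictPeriods_SL
  rw [← EisensteinSeries.E_qExpansion_coeff_zero hk hk2, qExpansion_coeff_zero one_pos hanal hper,
    ← cuspFunction_apply_zero one_pos hanal hper]
  exact (hanal.continuousAt.tendsto.comp (qParam_tendsto_atImInfty one_pos)).congr
    (fun τ ↦ SlashInvariantFormClass.eq_cuspFunction (E hk) τ one_mem_strictPeriods_SL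
      one_ne_zero)

open UpperHalfPlane ModularForm MatrixGroups in
theorem infinite_quotient : Set.Infinite {w : ℂ | ∃ z : ℍ, E₄ z ≠ 0 ∧ w = E₆ z ^ 2 / E₄ z ^ 3} := by
  have h4 := tendsto_E_atImInfty (by norm_num : 3 ≤ 4) ⟨2, rfl⟩
  have h6 := tendsto_E_atImInfty (by norm_num : 3 ≤ 6) ⟨3, rfl⟩
  have hw := (h6.pow 2).div (h4.pow 3) (by norm_num)
  norm_num at hw
  have hne : ∀ᶠ z in atImInfty, E₄ z ≠ 0 := h4.eventually_ne one_ne_zero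
  intro hfin
  have hmem : ∀ᶠ z in atImInfty, E₆ z ^ 2 / E₄ z ^ 3 ∈
      {w : ℂ | ∃ z : ℍ, E₄ z ≠ 0 ∧ w = E₆ z ^ 2 / E₄ z ^ 3} := hne.mono fun z hz => ⟨z, hz, rfl⟩
  obtain ⟨z, hz, h1⟩ := hfin.isClosed.mem_of_tendsto hw hmem
  rw [eq_div_iff (pow_ne_zero 3 hz), one_mul] at h1
  refine discriminant_ne_zero z ?_
  have := discriminant_eq_E₄_cube_sub_E₆_sq z
  rw [h1, sub_self, zero_div] at this
  exact this

theorem eval_vecCons_eq_zero_of_infinite {G : MvPolynomial (Fin 2) ℂ} {x : ℂ} {s : Set ℂ}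
    (hs : s.Infinite) (h : ∀ y ∈ s, MvPolynomial.eval ![x, y] G = 0) (y : ℂ) :
    MvPolynomial.eval ![x, y] G = 0 := by
  set H : Polynomial ℂ := MvPolynomial.aeval ![Polynomial.C x, Polynomial.X] G
  have hH : ∀ t, H.eval t = MvPolynomial.eval ![x, t] G := by
    intro t
    have e : (Polynomial.aeval t).comp (MvPolynomial.aeval ![Polynomial.C x, Polynomial.X]) =
        MvPolynomial.aeval (R := ℂ) ![x, t] := by
      ext j
      fin_cases j <;> simp
    have e2 := DFunLike.congr_fun e G
    rw [AlgHom.comp_apply, MvPolynomial.aeval_eq_eval, Polynomial.coe_aeval_eq_eval] at e2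
    exact e2
  have h0 : H = 0 :=
    Polynomial.eq_zero_of_infinite_isRoot H (hs.mono fun t ht => (hH t).trans (h t ht))
  rw [← hH, h0, Polynomial.eval_zero]

theorem differentiableOn_E4 : DifferentiableOn ℂ E4 {τ | 0 < τ.im} := by
  refine (UpperHalfPlane.mdifferentiable_iff.1 (ModularFormClass.holo ModularForm.E₄)).congr
    fun τ hτ => ?_
  have := E4_eq ⟨τ, hτ⟩
  rw [Function.comp_apply, UpperHalfPlane.ofComplex_apply_of_im_pos hτ]
  exact this

theorem differentiableOn_E6 : DifferentiableOn ℂ E6 {τ | 0 < τ.im} := by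
  refine (UpperHalfPlane.mdifferentiable_iff.1 (ModularFormClass.holo ModularForm.E₆)).congr
    fun τ hτ => ?_
  have := E6_eq ⟨τ, hτ⟩
  rw [Function.comp_apply, UpperHalfPlane.ofComplex_apply_of_im_pos hτ]
  exact this

theorem differentiableOn_eval {n : ℕ} (G : MvPolynomial (Fin n) ℂ) {f : ℂ → Fin n → ℂ} {s : Set ℂ}
    (hf : ∀ i, DifferentiableOn ℂ (fun τ => f τ i) s) :
    DifferentiableOn ℂ (fun τ => MvPolynomial.eval (f τ) G) s := by
  induction G using MvPolynomial.induction_on with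
  | C a =>
    simp only [MvPolynomial.eval_C]
    exact differentiableOn_const a
  | add p q hp hq =>
    simp only [map_add]
    exact hp.add hq
  | mul_X p i hp =>
    simp only [map_mul, MvPolynomial.eval_X]
    exact hp.mul (hf i)

/-- The Eisenstein series `E4` and `E6` satisfy no polynomial relation on a nonempty open set. -/
theorem E4_E6_independent {τ₀ : ℂ} (hτ₀ : 0 < τ₀.im) {G : MvPolynomial (Fin 2) ℂ}
    (h : ∀ᶠ τ in 𝓝 τ₀, MvPolynomial.eval ![E4 τ, E6 τ] G = 0) : G = 0 := by
  have hopen : IsOpen {τ : ℂ | 0 < τ.im} := isOpen_lt continuous_const Complex.continuous_im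
  have hd : DifferentiableOn ℂ (fun τ => MvPolynomial.eval ![E4 τ, E6 τ] G) {τ | 0 < τ.im} := by
    refine differentiableOn_eval G fun i => ?_
    fin_cases i
    · exact differentiableOn_E4
    · exact differentiableOn_E6
  have hall := (hd.analyticOnNhd hopen).eqOn_zero_of_preconnected_of_eventuallyEq_zero
    (convex_halfSpace_im_gt 0).isPreconnected hτ₀ h
  have hscale : ∀ (z : UpperHalfPlane) (t : ℂ),
      MvPolynomial.eval (fun j => t ^ (![4, 6] : Fin 2 → ℕ) j * ![E4 z, E6 z] j) G = 0 := by
    intro z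
    refine eval_scale_eq_zero G _ _ fun C => ?_
    obtain ⟨n, hn⟩ := exists_nat_gt (C + ‖(z : ℂ)‖)
    obtain ⟨w, hw⟩ := exists_modularForm_eq n z
    refine ⟨z + n, ?_, ?_⟩
    · have := norm_sub_norm_le (n : ℂ) (-z)
      rw [norm_neg, sub_neg_eq_add, add_comm (n : ℂ), Complex.norm_natCast] at this
      linarith
    · have h1 : MvPolynomial.eval ![E4 w, E6 w] G = 0 := hall w.im_pos
      convert h1 using 2
      congr 1
      funext j
      fin_cases j
      · simpa [E4_eq] using (hw 4 ModularForm.E₄).symm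
      · simpa [E6_eq] using (hw 6 ModularForm.E₆).symm
  have hx : ∀ x, x ≠ 0 → ∀ y, MvPolynomial.eval ![x, y] G = 0 := by
    intro x hx
    obtain ⟨s, hs⟩ := IsAlgClosed.exists_pow_nat_eq x (by norm_num : 0 < 4)
    have hs0 : s ≠ 0 := by
      rintro rfl
      exact hx (by rw [← hs]; norm_num)
    refine eval_vecCons_eq_zero_of_infinite
      (s := (fun y => y ^ 2 / s ^ 12) ⁻¹' {w : ℂ | ∃ z : UpperHalfPlane, ModularForm.E₄ z ≠ 0 ∧
        w = ModularForm.E₆ z ^ 2 / ModularForm.E₄ z ^ 3}) ?_ ?_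
    · refine infinite_quotient.preimage fun w _ => ?_
      obtain ⟨y, hy⟩ := IsAlgClosed.exists_pow_nat_eq (w * s ^ 12) (by norm_num : 0 < 2)
      exact ⟨y, by simp only [hy]; field_simp⟩
    · rintro y ⟨z, hz, he⟩
      obtain ⟨t, ht⟩ := IsAlgClosed.exists_pow_nat_eq (x / E4 z) (by norm_num : 0 < 4)
      rw [← E4_eq] at hz he
      rw [← E6_eq] at he
      have ht4 : t ^ 4 * E4 z = x := by rw [ht]; field_simp
      have hy : y ^ 2 = (t ^ 6 * E6 z) ^ 2 := by
        have h12 : (t ^ 4 * E4 z) ^ 3 = s ^ 12 := by rw [ht4, ← hs]; ring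
        rw [div_eq_div_iff (pow_ne_zero _ hs0) (pow_ne_zero _ hz), ← h12] at he
        have h3 : E4 z ^ 3 ≠ 0 := pow_ne_zero _ hz
        apply mul_right_cancel₀ h3
        linear_combination he
      rcases sq_eq_sq_iff_eq_or_eq_neg.1 hy with hy | hy
      · have := hscale z t
        convert this using 2
        congr 1
        funext j
        fin_cases j
        · simpa using ht4.symm
        · simpa using hy
      · have := hscale z (I * t)
        convert this using 2
        congr 1
        funext j
        fin_cases j
        · simpa [mul_pow] using ht4.symm
        · have : I ^ 6 = -1 := by rw [show 6 = 4 + 2 by rfl, pow_add, I_pow_four, I_sq]; ring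
          simp [mul_pow, this, hy]
  refine eq_zero_of_eventually_eval_eq_zero (x := ![1, 0]) ?_
  have : ∀ᶠ y in 𝓝 (![1, 0] : Fin 2 → ℂ), y 0 ≠ 0 :=
    (continuous_apply 0).continuousAt.eventually_ne (by simp)
  filter_upwards [this] with y hy
  have := hx (y 0) hy (y 1)
  convert this using 2
  congr 1
  funext j
  fin_cases j <;> rfl

/-- The expression for `a2f` in terms of Eisenstein series and the nine forms. -/
def a2Val (e4 d p1 p2 : ℂ) : ℂ :=
  6 / (e4 * d) * (-e4 * p2 + p1 ^ 2)

/-- The expression for `a3f` in terms of Eisenstein series and the nine forms. -/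
def a3Val (e4 e6 d p1 p2 r2 p3 r3 : ℂ) : ℂ :=
  1 / (9 * e4 ^ 2 * d ^ 2) *
    (-7 * e4 ^ 2 * e6 * p3 - 20 * e4 ^ 3 * r3
      - 9 * e4 * e6 * p1 * p2 + 30 * e4 ^ 2 * p1 * r2
      + 6 * e6 * p1 ^ 3)

/-- The expression for `a4f` in terms of Eisenstein series and the nine forms. -/
def a4Val (e4 e6 d p1 p2 r2 p3 p4 : ℂ) : ℂ :=
  1 / (288 * e4 ^ 3 * d ^ 3) *
    (576 * e4 ^ 3 * d * p4 + 32256 * e4 ^ 2 * d * p1 * p3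
      - 9 * e4 ^ 5 * p2 ^ 2 - 30 * e4 ^ 3 * e6 * p2 * r2
      - 25 * e4 ^ 4 * r2 ^ 2
      + (60 * e4 ^ 4 - 12 * e4 * e6 ^ 2) * p1 ^ 2 * p2
      + 80 * e4 ^ 2 * e6 * p1 ^ 2 * r2
      + (-70 * e4 ^ 3 + 6 * e6 ^ 2) * p1 ^ 4)

/-- The expression for `b1f` in terms of Eisenstein series and the nine forms. -/
def b1Val (e4 p1 : ℂ) : ℂ := -4 / e4 * p1

/-- The expression for `b2f` in terms of Eisenstein series and the nine forms. -/
def b2Val (e4 e6 d p1 r2 : ℂ) : ℂ :=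
  5 / (6 * e4 ^ 2 * d) * (e4 ^ 2 * r2 - e6 * p1 ^ 2)

/-- The expression for `b3f` in terms of Eisenstein series and the nine forms. -/
def b3Val (e4 e6 d p1 p2 r2 p3 r3 : ℂ) : ℂ :=
  1 / (108 * e4 ^ 3 * d ^ 2) *
    (-7 * e4 ^ 5 * p3 - 20 * e4 ^ 3 * e6 * r3
      - 9 * e4 ^ 4 * p1 * p2 + 30 * e4 ^ 2 * e6 * p1 * r2
      + (16 * e4 ^ 3 - 10 * e6 ^ 2) * p1 ^ 3)

/-- The expression for `b4f` in terms of Eisenstein series and the nine forms. -/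
def b4Val (e4 e6 d p1 p2 r2 r3 r4 : ℂ) : ℂ :=
  1 / (1728 * e4 ^ 4 * d ^ 3) *
    (-8640 * e4 ^ 4 * d * r4 + 138240 * e4 ^ 3 * d * p1 * r3
      + 9 * e4 ^ 5 * e6 * p2 ^ 2 + 30 * e4 ^ 6 * p2 * r2
      + 25 * e4 ^ 4 * e6 * r2 ^ 2
      - 48 * e4 ^ 4 * e6 * p1 ^ 2 * p2
      + (-140 * e4 ^ 5 + 60 * e4 ^ 2 * e6 ^ 2) * p1 ^ 2 * r2
      + (74 * e4 ^ 3 * e6 - 10 * e6 ^ 3) * p1 ^ 4)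

/-- The expression for `b5f` in terms of Eisenstein series and the nine forms. -/
def b5Val (e4 e6 d p1 p2 r2 p3 r3 p5 : ℂ) : ℂ :=
  1 / (72 * e4 ^ 5 * d ^ 3) *
    (-36288 * e4 ^ 4 * d * p5 - 294 * e4 ^ 6 * p2 * p3
      - 770 * e4 ^ 4 * e6 * r2 * p3 - 840 * e4 ^ 4 * e6 * p2 * r3
      - 2200 * e4 ^ 5 * r2 * r3 + 168 * e4 ^ 5 * p1 ^ 2 * p3
      + 480 * e4 ^ 3 * e6 * p1 ^ 2 * r3 - 621 * e4 ^ 5 * p1 * p2 ^ 2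
      + 3525 * e4 ^ 4 * p1 * r2 ^ 2 + 1224 * e4 ^ 4 * p1 ^ 3 * p2
      - 240 * e4 ^ 2 * e6 * p1 ^ 3 * r2
      + (-456 * e4 ^ 3 + 24 * e6 ^ 2) * p1 ^ 5)

/-- The expression for `b6f` in terms of Eisenstein series and the nine forms. -/
def b6Val (e4 e6 d p1 p2 r2 p3 r3 p4 r4 p5 r6 : ℂ) : ℂ :=
  1 / (4478976 * e4 ^ 6 * d ^ 5) *
    (-19906560 * e4 ^ 6 * d ^ 2 * r6
      - 188116992 * e4 ^ 4 * e6 * d ^ 2 * p1 * p5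
      - 5184 * e4 ^ 7 * e6 * d * p2 * p4
      - 8640 * e4 ^ 8 * d * r2 * p4
      - 103680 * e4 ^ 8 * d * p2 * r4
      - 172800 * e4 ^ 6 * e6 * d * r2 * r4
      + 12672 * e4 ^ 6 * e6 * d * p1 ^ 2 * p4
      + 17280 * (5 * e4 ^ 7 + 9 * e4 ^ 4 * e6 ^ 2) * d * p1 ^ 2 * r4
      + 112896 * e4 ^ 7 * e6 * d * p3 ^ 2
      + 645120 * e4 ^ 8 * d * p3 * r3
      + 921600 * e4 ^ 6 * e6 * d * r3 ^ 2
      - 1717632 * e4 ^ 6 * e6 * d * p1 * p2 * p3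
      - 362880 * (4 * e4 ^ 7 + 11 * e4 ^ 4 * e6 ^ 2) * d * p1 * r2 * p3
      + 483840 * (4 * e4 ^ 7 - 9 * e4 ^ 4 * e6 ^ 2) * d * p1 * p2 * r3
      - 11404800 * e4 ^ 5 * e6 * d * p1 * r2 * r3
      + 1161216 * e4 ^ 5 * e6 * d * p1 ^ 3 * p3
      - 92160 * (37 * e4 ^ 6 - 9 * e4 ^ 3 * e6 ^ 2) * d * p1 ^ 3 * r3
      + (135 * e4 ^ 9 * e6 + 54 * e4 ^ 6 * e6 ^ 3) * p2 ^ 3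
      + (405 * e4 ^ 10 + 540 * e4 ^ 7 * e6 ^ 2) * p2 ^ 2 * r2
      + 1575 * e4 ^ 8 * e6 * p2 * r2 ^ 2
      + (375 * e4 ^ 9 + 500 * e4 ^ 6 * e6 ^ 2) * r2 ^ 3
      + (-3159 * e4 ^ 8 * e6 + 1701 * e4 ^ 5 * e6 ^ 3) * p1 ^ 2 * p2 ^ 2
      + (-3060 * e4 ^ 9 - 1800 * e4 ^ 6 * e6 ^ 2) * p1 ^ 2 * p2 * r2
      + (6975 * e4 ^ 7 * e6 - 11025 * e4 ^ 4 * e6 ^ 3) * p1 ^ 2 * r2 ^ 2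
      + (6768 * e4 ^ 7 * e6 - 3024 * e4 ^ 4 * e6 ^ 3) * p1 ^ 4 * p2
      + (4260 * e4 ^ 8 + 1800 * e4 ^ 5 * e6 ^ 2 + 180 * e4 ^ 2 * e6 ^ 4) * p1 ^ 4 * r2
      + (-3692 * e4 ^ 6 * e6 + 504 * e4 ^ 3 * e6 ^ 3 - 12 * e6 ^ 5) * p1 ^ 6)

/-- The eleven generators as functions of `E4`, `E6`, `Dl` and the nine forms. -/
def abVal (e4 e6 d : ℂ) (x : Fin 9 → ℂ) : Fin 11 → ℂ :=
  ![e4 / 12,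
    a2Val e4 d (x 0) (x 1),
    a3Val e4 e6 d (x 0) (x 1) (x 5) (x 2) (x 6),
    a4Val e4 e6 d (x 0) (x 1) (x 5) (x 2) (x 3),
    e6 / 216,
    b1Val e4 (x 0),
    b2Val e4 e6 d (x 0) (x 5),
    b3Val e4 e6 d (x 0) (x 1) (x 5) (x 2) (x 6),
    b4Val e4 e6 d (x 0) (x 1) (x 5) (x 6) (x 7),
    b5Val e4 e6 d (x 0) (x 1) (x 5) (x 2) (x 6) (x 4),
    b6Val e4 e6 d (x 0) (x 1) (x 5) (x 2) (x 6) (x 3) (x 7) (x 4) (x 8)]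

theorem abGens_eq_abVal (τ : ℂ) (z : Fin 8 → ℂ) (i : Fin 11) :
    abGens i τ z = abVal (E4 τ) (E6 τ) (Dl τ) (fun j => nineForms j τ z) i := by
  fin_cases i <;> rfl

/-- Polynomial functions on `ℂ ^ n`. -/
def IsPoly {n : ℕ} (f : (Fin n → ℂ) → ℂ) : Prop :=
  ∃ Q : MvPolynomial (Fin n) ℂ, ∀ x, MvPolynomial.eval x Q = f x

namespace IsPoly

variable {n : ℕ} {f g : (Fin n → ℂ) → ℂ}

theorem const (c : ℂ) : IsPoly fun _ : Fin n → ℂ => c := ⟨MvPolynomial.C c, by simp⟩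

theorem coord (i : Fin n) : IsPoly fun x : Fin n → ℂ => x i := ⟨MvPolynomial.X i, by simp⟩

theorem add (hf : IsPoly f) (hg : IsPoly g) : IsPoly fun x => f x + g x := by
  obtain ⟨P, hP⟩ := hf
  obtain ⟨Q, hQ⟩ := hg
  exact ⟨P + Q, by simp [hP, hQ]⟩

theorem sub (hf : IsPoly f) (hg : IsPoly g) : IsPoly fun x => f x - g x := by
  obtain ⟨P, hP⟩ := hf
  obtain ⟨Q, hQ⟩ := hg
  exact ⟨P - Q, by simp [hP, hQ]⟩

theorem mul (hf : IsPoly f) (hg : IsPoly g) : IsPoly fun x => f x * g x := by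
  obtain ⟨P, hP⟩ := hf
  obtain ⟨Q, hQ⟩ := hg
  exact ⟨P * Q, by simp [hP, hQ]⟩

end IsPoly

theorem isPoly_abVal (e4 e6 d : ℂ) (i : Fin 11) : IsPoly fun x => abVal e4 e6 d x i := by
  fin_cases i
  on_goal 1 => exact .const (e4 / 12)
  on_goal 4 => exact .const (e6 / 216)
  on_goal 1 => change IsPoly fun x => a2Val e4 d (x 0) (x 1); unfold a2Val
  on_goal 2 => change IsPoly fun x => a3Val e4 e6 d (x 0) (x 1) (x 5) (x 2) (x 6); unfold a3Val
  on_goal 3 => change IsPoly fun x => a4Val e4 e6 d (x 0) (x 1) (x 5) (x 2) (x 3); unfold a4Val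
  on_goal 4 => change IsPoly fun x => b1Val e4 (x 0); unfold b1Val
  on_goal 5 => change IsPoly fun x => b2Val e4 e6 d (x 0) (x 5); unfold b2Val
  on_goal 6 => change IsPoly fun x => b3Val e4 e6 d (x 0) (x 1) (x 5) (x 2) (x 6); unfold b3Val
  on_goal 7 => change IsPoly fun x => b4Val e4 e6 d (x 0) (x 1) (x 5) (x 6) (x 7); unfold b4Val
  on_goal 8 => change IsPoly fun x => b5Val e4 e6 d (x 0) (x 1) (x 5) (x 2) (x 6) (x 4); unfold b5Val
  on_goal 9 => change IsPoly fun x => b6Val e4 e6 d (x 0) (x 1) (x 5) (x 2) (x 6) (x 3) (x 7) (x 4) (x 8); unfold b6Val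
  all_goals
    repeat' first
      | exact .const _
      | exact .coord _
      | refine IsPoly.add ?_ ?_
      | refine IsPoly.sub ?_ ?_
      | refine IsPoly.mul ?_ ?_

theorem exists_eq_of_affine {f : ℂ → ℂ} {c : ℂ} (hc : c ≠ 0) (h : ∀ t, f t = f 0 + c * t) (y : ℂ) :
    ∃ t, f t = y :=
  ⟨(y - f 0) / c, by rw [h, mul_div_cancel₀ _ hc, add_sub_cancel]⟩

theorem exists_eq_of_affine₂ {f g : ℂ → ℂ → ℂ} {a b c d : ℂ} (hdet : a * d - b * c ≠ 0)
    (hf : ∀ s t, f s t = f 0 0 + a * s + b * t) (hg : ∀ s t, g s t = g 0 0 + c * s + d * t)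
    (y w : ℂ) : ∃ s t, f s t = y ∧ g s t = w := by
  refine ⟨(d * (y - f 0 0) - b * (w - g 0 0)) / (a * d - b * c),
    (a * (w - g 0 0) - c * (y - f 0 0)) / (a * d - b * c), ?_, ?_⟩
  · rw [hf]
    linear_combination (y - f 0 0) * mul_inv_cancel₀ hdet
  · rw [hg]
    linear_combination (w - g 0 0) * mul_inv_cancel₀ hdet

theorem exists_abVal_eq {e4 e6 d : ℂ} (h4 : e4 ≠ 0) (hd : d ≠ 0) (h : e4 ^ 3 - e6 ^ 2 = 1728 * d)
    {y : Fin 11 → ℂ} (h0 : y 0 = e4 / 12) (h1 : y 4 = e6 / 216) : ∃ x, abVal e4 e6 d x = y := by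
  obtain ⟨p1, e1⟩ := exists_eq_of_affine (f := fun t => b1Val e4 t) (c := -4 / e4)
    (by simp [h4]) (fun t => by simp only [b1Val]; ring) (y 5)
  obtain ⟨p2, e2⟩ := exists_eq_of_affine (f := fun t => a2Val e4 d p1 t) (c := 6 / (e4 * d) * -e4)
    (by simp [h4, hd]) (fun t => by simp only [a2Val]; ring) (y 1)
  obtain ⟨r2, e3⟩ := exists_eq_of_affine (f := fun t => b2Val e4 e6 d p1 t)
    (c := 5 / (6 * e4 ^ 2 * d) * e4 ^ 2)
    (by simp [h4, hd]) (fun t => by simp only [b2Val]; ring) (y 6)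
  obtain ⟨p3, r3, e4', e5⟩ := exists_eq_of_affine₂ (f := fun s t => a3Val e4 e6 d p1 p2 r2 s t)
    (g := fun s t => b3Val e4 e6 d p1 p2 r2 s t)
    (a := 1 / (9 * e4 ^ 2 * d ^ 2) * (-7 * e4 ^ 2 * e6))
    (b := 1 / (9 * e4 ^ 2 * d ^ 2) * (-20 * e4 ^ 3))
    (c := 1 / (108 * e4 ^ 3 * d ^ 2) * (-7 * e4 ^ 5))
    (d := 1 / (108 * e4 ^ 3 * d ^ 2) * (-20 * e4 ^ 3 * e6))
    (by
      have : 1 / (9 * e4 ^ 2 * d ^ 2) * (-7 * e4 ^ 2 * e6) *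
          (1 / (108 * e4 ^ 3 * d ^ 2) * (-20 * e4 ^ 3 * e6)) -
          1 / (9 * e4 ^ 2 * d ^ 2) * (-20 * e4 ^ 3) * (1 / (108 * e4 ^ 3 * d ^ 2) * (-7 * e4 ^ 5))
          = -(1 / (9 * e4 ^ 2 * d ^ 2) * (1 / (108 * e4 ^ 3 * d ^ 2)) * (140 * e4 ^ 5)
            * (1728 * d)) := by
        rw [← h]
        ring
      rw [this]
      simp [h4, hd])
    (fun s t => by simp only [a3Val]; ring) (fun s t => by simp only [b3Val]; ring) (y 2) (y 7)
  obtain ⟨p4, e6'⟩ := exists_eq_of_affine (f := fun t => a4Val e4 e6 d p1 p2 r2 p3 t)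
    (c := 1 / (288 * e4 ^ 3 * d ^ 3) * (576 * e4 ^ 3 * d))
    (by simp [h4, hd]) (fun t => by simp only [a4Val]; ring) (y 3)
  obtain ⟨r4, e7⟩ := exists_eq_of_affine (f := fun t => b4Val e4 e6 d p1 p2 r2 r3 t)
    (c := 1 / (1728 * e4 ^ 4 * d ^ 3) * (-8640 * e4 ^ 4 * d))
    (by simp [h4, hd]) (fun t => by simp only [b4Val]; ring) (y 8)
  obtain ⟨p5, e8⟩ := exists_eq_of_affine (f := fun t => b5Val e4 e6 d p1 p2 r2 p3 r3 t)
    (c := 1 / (72 * e4 ^ 5 * d ^ 3) * (-36288 * e4 ^ 4 * d))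
    (by simp [h4, hd]) (fun t => by simp only [b5Val]; ring) (y 9)
  obtain ⟨r6, e9⟩ := exists_eq_of_affine (f := fun t => b6Val e4 e6 d p1 p2 r2 p3 r3 p4 r4 p5 t)
    (c := 1 / (4478976 * e4 ^ 6 * d ^ 5) * (-19906560 * e4 ^ 6 * d ^ 2))
    (by simp [h4, hd]) (fun t => by simp only [b6Val]; ring) (y 10)
  refine ⟨![p1, p2, p3, p4, p5, r2, r3, r4, r6], ?_⟩
  funext i
  fin_cases i
  exacts [h0.symm, e2, e4', e6', h1.symm, e1, e3, e5, e7, e8, e9]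

theorem abGens_independent {P : MvPolynomial (Fin 11) ℂ} (hP : ∀ τ : ℂ, GoodTau τ →
    ∀ z : Fin 8 → ℂ, MvPolynomial.eval (fun i => abGens i τ z) P = 0) : P = 0 := by
  have hrel : ∀ᶠ τ in 𝓝 baseTau, GoodTau τ → ∀ y : Fin 11 → ℂ, y 0 = E4 τ / 12 →
      y 4 = E6 τ / 216 → MvPolynomial.eval y P = 0 := by
    filter_upwards [eventually_nineForms_independent] with τ hτ hgood y h0 h1
    choose Q hQ using isPoly_abVal (E4 τ) (E6 τ) (Dl τ)
    have hbind : ∀ x, MvPolynomial.eval x (MvPolynomial.bind₁ Q P) =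
        MvPolynomial.eval (abVal (E4 τ) (E6 τ) (Dl τ) x) P := by
      intro x
      rw [← MvPolynomial.coe_aeval_eq_eval, RingHom.coe_coe, MvPolynomial.aeval_bind₁,
        ← MvPolynomial.coe_aeval_eq_eval, RingHom.coe_coe]
      congr 2
      funext i
      exact hQ i x
    have hzero : MvPolynomial.bind₁ Q P = 0 := by
      refine hτ _ fun z => ?_
      rw [hbind, ← hP τ hgood z]
      congr 2
      funext i
      exact (abGens_eq_abVal τ z i).symm
    obtain ⟨x, rfl⟩ := exists_abVal_eq hgood.2.1 hgood.2.2.2 (by rw [Dl]; ring) h0 h1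
    rw [← hbind, hzero, map_zero]
  refine MvPolynomial.funext fun y => ?_
  set G : MvPolynomial (Fin 2) ℂ := MvPolynomial.bind₁ (fun i => if i = 0 then
    MvPolynomial.C (1 / 12) * MvPolynomial.X 0 else if i = 4 then
    MvPolynomial.C (1 / 216) * MvPolynomial.X 1 else MvPolynomial.C (y i)) P
  have hG : ∀ u v : ℂ, MvPolynomial.eval ![u, v] G = MvPolynomial.eval
      (fun i => if i = 0 then u / 12 else if i = 4 then v / 216 else y i) P := by
    intro u v
    rw [← MvPolynomial.coe_aeval_eq_eval, RingHom.coe_coe, MvPolynomial.aeval_bind₁,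
      ← MvPolynomial.coe_aeval_eq_eval, RingHom.coe_coe]
    congr 2
    funext i
    split_ifs
    · simp
      ring
    · simp
      ring
    · simp
  set H : MvPolynomial (Fin 2) ℂ := MvPolynomial.X 0 * MvPolynomial.X 1 *
    (MvPolynomial.X 0 ^ 3 - MvPolynomial.X 1 ^ 2)
  have hH : H ≠ 0 := by
    intro h
    have := congrArg (MvPolynomial.eval ![1, 2]) h
    norm_num [H] at this
  have hGH : G * H = 0 := by
    refine E4_E6_independent baseTau_im_pos ?_
    filter_upwards [hrel, (isOpen_lt continuous_const Complex.continuous_im).mem_nhds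
      baseTau_im_pos] with τ hτ him
    rw [map_mul]
    by_cases hgood : GoodTau τ
    · rw [hG, hτ hgood _ (by simp) (by simp), zero_mul]
    · refine mul_eq_zero_of_right _ ?_
      by_contra hne
      simp only [H, map_mul, map_sub, map_pow, MvPolynomial.eval_X, Matrix.cons_val_zero,
        Matrix.cons_val_one, mul_eq_zero, not_or] at hne
      exact hgood ⟨him, hne.1.1, hne.1.2, div_ne_zero hne.2 (by norm_num)⟩
  have hG0 := (mul_eq_zero.1 hGH).resolve_right hH
  have := hG (12 * y 0) (216 * y 4)
  rw [hG0, map_zero] at this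
  rw [map_zero, this]
  congr 2
  funext i
  split_ifs with h h
  · rw [h]; ring
  · rw [h]; ring
  · rfl

/-- The eleven meromorphic Jacobi forms a_0, a_2, a_3, a_4, b_0, b_1, …, b_6
are algebraically independent over ℂ. -/
theorem ab_algebraically_independent :
    ∀ P : MvPolynomial (Fin 11) ℂ,
      (∀ τ : ℂ, GoodTau τ → ∀ z : Fin 8 → ℂ,
        MvPolynomial.eval (fun i => abGens i τ z) P = 0) → P = 0 := by
  intro P hP
  exact abGens_independent hP

end E8Jacobi
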